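/- arXiv:1811.11660 — 4 statements merged into one kernel-verified Lean document; each statement's English description precedes it below -/
import Mathlib

section
/- Let (Q, Σ) be a DFA with n = |Q| and let c be a natural number with c ≤ 3. If there exists a word w over Σ such that |Qw| ≤ n − c, then there exists a word w over Σ with |w| ≤ c² and |Qw| ≤ n − c. -/
/-- The image of a finite set of states `R` under a word (list of letters),
where each letter `s` acts on states via `act s`. -/
def wordImage {Q A : Type*} [DecidableEq Q] (act : A → Q → Q) (R : Finset Q) :
    List A → Finset Q
  | [] => R
  | s :: w => wordImage act (R.image (act s)) w

/-!
The deficiency of a word is the number of states it misses. Let `u` have deficiency `k`, and let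
`v` be a shortest word such that `uv` has larger deficiency. The sets missed by `u` followed by the
proper prefixes of `v`, and the images under these prefixes of a pair merged by `v`, form a skew
cross-intersecting family, so Frankl's skew version of Bollobás' theorem bounds `|v|` by
`(k + 2).choose 2`. Adding up, deficiency `c` is reached within `(c + 2).choose 3` letters. This is
at most `c ^ 2` for `c ≤ 2`, but one letter too many for `c = 3`.

For `c = 3`, a word of length at most `3` and deficiency `2` saves that letter. If there is none,
the letters are of a very restricted shape (`IsTwoTight`). Let `G l` be the graph of the pairs of
states jointly missed by a word of length at most `l`. If no word of length at most `9` had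
deficiency `3`, each step of a shortest merging path of length `6` would give a pair that covers
the edges of one graph in the chain `G 3 ≤ G 4 ≤ ⋯ ≤ G 9` but not those of the next. This leaves
`G 4`, `G 5` and `G 6` with exactly one, two and three edges, and the shape of the letters forces
these edges to be those of a triangle on an invariant set of three states containing every state
missed by a letter. Then no word at all has deficiency `3`.
-/

section SkewBollobas

open MvPolynomial

theorem finrank_homogeneousSubmodule (K σ : Type*) [CommRing K] [Nontrivial K] [Fintype σ] (n : ℕ) :
    Module.finrank K (homogeneousSubmodule σ K n) = (Fintype.card σ + n - 1).choose n := by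
  classical
  have hset : {d : σ →₀ ℕ | d.degree = n} =
      ((Finset.univ.finsuppAntidiag n : Finset (σ →₀ ℕ)) : Set (σ →₀ ℕ)) := by
    ext d
    simp [Finsupp.degree_eq_sum]
  rw [homogeneousSubmodule_eq_finsupp_supported, hset]
  change Module.finrank K (restrictSupport K _) = _
  rw [Module.finrank_eq_card_basis (basisRestrictSupport K _)]
  simp [Finset.card_finsuppAntidiag_nat_eq_choose]

theorem linearIndependent_of_isLowerTriangular {K V ι : Type*} [Field K] [AddCommGroup V]
    [Module K V] [Finite ι] [LinearOrder ι] (f : ι → V) (φ : ι → Module.Dual K V)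
    (hdiag : ∀ i, φ i (f i) ≠ 0) (hzero : ∀ i j, i < j → φ j (f i) = 0) :
    LinearIndependent K f := by
  have := Fintype.ofFinite ι
  let M : Matrix ι ι K := .of fun i j => φ j (f i)
  have hdet : M.det ≠ 0 := by
    rw [M.det_of_isLowerTriangular fun i j hij => hzero i j hij]
    exact Finset.prod_ne_zero_iff.2 fun i _ => hdiag i
  have hM := Matrix.linearIndependent_rows_of_isUnit (M.isUnit_iff_isUnit_det.2 hdet.isUnit)
  exact LinearIndependent.of_comp (LinearMap.pi φ) hM

/-- The form `∏ x ∈ A, ∑ k, Y_k * x ^ k` in variables `Y_0, …, Y_b`. Its value at the coefficients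
of the monic polynomial with simple roots `B`, where `B` has `b` elements, vanishes exactly when
`A` meets `B`. -/
noncomputable def evalProd {K : Type*} [CommSemiring K] (b : ℕ) (A : Finset K) :
    MvPolynomial (Fin (b + 1)) K :=
  ∏ x ∈ A, ∑ k : Fin (b + 1), C (x ^ (k : ℕ)) * X k

theorem evalProd_isHomogeneous {K : Type*} [CommSemiring K] (b : ℕ) (A : Finset K) :
    (evalProd b A).IsHomogeneous A.card := by
  rw [Finset.card_eq_sum_ones]
  exact IsHomogeneous.prod A _ _ fun x _ =>
    IsHomogeneous.sum Finset.univ _ 1 fun k _ => isHomogeneous_C_mul_X (x ^ (k : ℕ)) k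

theorem eval_coeff_evalProd {K : Type*} [CommSemiring K] {b : ℕ} (A : Finset K) {p : Polynomial K}
    (hp : p.natDegree ≤ b) :
    eval (fun k : Fin (b + 1) => p.coeff k) (evalProd b A) = ∏ x ∈ A, p.eval x := by
  simp only [evalProd, map_prod, map_sum, map_mul, eval_C, eval_X]
  refine Finset.prod_congr rfl fun x _ => ?_
  rw [Polynomial.eval_eq_sum_range' (Nat.lt_succ_of_le hp), Finset.sum_range]
  exact Finset.sum_congr rfl fun k _ => mul_comm _ _

theorem eval_coeff_prod_X_sub_C_evalProd_eq_zero_iff {K : Type*} [CommRing K] [IsDomain K] {b : ℕ}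
    (A B : Finset K) (hB : B.card = b) :
    eval (fun k : Fin (b + 1) => (∏ y ∈ B, (Polynomial.X - Polynomial.C y)).coeff k)
      (evalProd b A) = 0 ↔ ¬Disjoint A B := by
  rw [eval_coeff_evalProd A (by simp [hB]), Finset.not_disjoint_iff]
  simp [Finset.prod_eq_zero_iff, Polynomial.eval_prod, sub_eq_zero]

theorem card_le_choose_of_skew_cross_intersecting_field {K ι : Type*} [Field K] [Fintype ι]
    [LinearOrder ι] {a b : ℕ} (A B : ι → Finset K) (hA : ∀ i, (A i).card = a)
    (hB : ∀ i, (B i).card = b) (hdisj : ∀ i, Disjoint (A i) (B i))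
    (hinter : ∀ i j, i < j → ¬Disjoint (A i) (B j)) :
    Fintype.card ι ≤ (a + b).choose a := by
  let f (i : ι) : homogeneousSubmodule (Fin (b + 1)) K a :=
    ⟨evalProd b (A i), hA i ▸ evalProd_isHomogeneous b (A i)⟩
  let φ (j : ι) : Module.Dual K (homogeneousSubmodule (Fin (b + 1)) K a) :=
    (aeval fun k : Fin (b + 1) =>
      (∏ y ∈ B j, (Polynomial.X - Polynomial.C y)).coeff k).toLinearMap.domRestrict _
  have hφ (i j : ι) : φ j (f i) = 0 ↔ ¬Disjoint (A i) (B j) :=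
    eval_coeff_prod_X_sub_C_evalProd_eq_zero_iff (A i) (B j) (hB j)
  have hli : LinearIndependent K f := linearIndependent_of_isLowerTriangular f φ
    (fun i => by simpa [hφ] using hdisj i) fun i j hij => (hφ i j).2 (hinter i j hij)
  have hfin : Module.finrank K (homogeneousSubmodule (Fin (b + 1)) K a) = (a + b).choose a := by
    rw [finrank_homogeneousSubmodule, Fintype.card_fin]
    congr 1
    omega
  have : Module.Finite K (homogeneousSubmodule (Fin (b + 1)) K a) :=
    .of_fg (homogeneousSubmodule_fg _ _ a)
  exact hfin ▸ hli.fintype_card_le_finrank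

-- Frankl's skew version of Bollobás' theorem; the variables of a rational function field provide
-- an embedding of `α` into a field.
theorem card_le_choose_of_skew_cross_intersecting {α ι : Type*} [Fintype ι]
    [LinearOrder ι] {a b : ℕ} (A B : ι → Finset α) (hA : ∀ i, (A i).card = a)
    (hB : ∀ i, (B i).card = b) (hdisj : ∀ i, Disjoint (A i) (B i))
    (hinter : ∀ i j, i < j → ¬Disjoint (A i) (B j)) :
    Fintype.card ι ≤ (a + b).choose a := by
  let e : α ↪ FractionRing (MvPolynomial α ℚ) :=
    ⟨fun x => algebraMap _ _ (X x : MvPolynomial α ℚ),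
      (IsFractionRing.injective _ _).comp (X_injective)⟩
  apply card_le_choose_of_skew_cross_intersecting_field (fun i => (A i).map e)
    (fun i => (B i).map e) <;> simpa

end SkewBollobas

section Words

variable {Q A : Type*} (act : A → Q → Q)

/-- The transformation of the states induced by a word. -/
def wordMap (w : List A) (q : Q) : Q :=
  w.foldl (fun p s => act s p) q

theorem wordMap_append (u v : List A) (q : Q) :
    wordMap act (u ++ v) q = wordMap act v (wordMap act u q) :=
  List.foldl_append

variable [DecidableEq Q]

theorem wordImage_eq_image_wordMap (R : Finset Q) (w : List A) :
    wordImage act R w = R.image (wordMap act w) := by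
  induction w generalizing R with
  | nil => exact Finset.image_id.symm
  | cons s w ih =>
    rw [wordImage, ih, Finset.image_image]
    rfl

variable [Fintype Q]

/-- The states outside the image `Qw` of a word `w`; their number is the deficiency of `w`. -/
def missed (w : List A) : Finset Q :=
  (wordImage act Finset.univ w)ᶜ

theorem card_missed_add_card_wordImage (w : List A) :
    (missed act w).card + (wordImage act Finset.univ w).card = Fintype.card Q :=
  Finset.card_compl_add_card _

variable {act}

theorem mem_missed {w : List A} {q : Q} : q ∈ missed act w ↔ ∀ p, wordMap act w p ≠ q := by
  simp [missed, wordImage_eq_image_wordMap]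

theorem missed_nil : missed act [] = ∅ := by
  simp [missed, wordImage]

theorem mem_missed_append {u v : List A} {q : Q} :
    q ∈ missed act (u ++ v) ↔ ∀ p, wordMap act v p = q → p ∈ missed act u := by
  simp only [mem_missed, wordMap_append]
  grind

theorem missed_subset_append (u v : List A) : missed act v ⊆ missed act (u ++ v) :=
  fun _ hq => mem_missed_append.2 fun p hp => absurd hp (mem_missed.1 hq p)

theorem wordMap_notMem_missed_append {u : List A} {q : Q} (hq : q ∉ missed act u) (v : List A) :
    wordMap act v q ∉ missed act (u ++ v) :=
  fun h => hq (mem_missed_append.1 h q rfl)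

theorem missed_append_compl (u v : List A) :
    (missed act (u ++ v))ᶜ = (missed act u)ᶜ.image (wordMap act v) := by
  ext q
  simp [mem_missed_append, and_comm]

theorem card_missed_le_append (u v : List A) :
    (missed act u).card ≤ (missed act (u ++ v)).card := by
  have himage := missed_append_compl (act := act) u v ▸ Finset.card_image_le
  have hu := Finset.card_add_card_compl (missed act u)
  have huv := Finset.card_add_card_compl (missed act (u ++ v))
  omega

theorem card_missed_append_le_iff {u v : List A} :
    (missed act (u ++ v)).card ≤ (missed act u).card ↔
      Set.InjOn (wordMap act v) ↑(missed act u)ᶜ := by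
  have hle := card_missed_le_append (act := act) u v
  have hu := Finset.card_add_card_compl (missed act u)
  have huv := Finset.card_add_card_compl (missed act (u ++ v))
  rw [← Finset.card_image_iff, ← missed_append_compl]
  omega

theorem mem_missed_or_mem_missed_of_wordMap_eq {u v : List A} {p q : Q} (hpq : p ≠ q)
    (hmerge : wordMap act v p = wordMap act v q)
    (hcard : (missed act (u ++ v)).card ≤ (missed act u).card) :
    p ∈ missed act u ∨ q ∈ missed act u := by
  by_contra! h
  exact hpq (card_missed_append_le_iff.1 hcard (by simpa using h.1) (by simpa using h.2) hmerge)

theorem exists_wordMap_eq_of_card_missed_lt {u v : List A}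
    (h : (missed act u).card < (missed act (u ++ v)).card) :
    ∃ p q, p ∉ missed act u ∧ q ∉ missed act u ∧ p ≠ q ∧ wordMap act v p = wordMap act v q := by
  have h := card_missed_append_le_iff.not.1 h.not_ge
  simp only [Set.InjOn, not_forall] at h
  obtain ⟨p, hp, q, hq, hmerge, hpq⟩ := h
  exact ⟨p, q, by simpa using hp, by simpa using hq, hpq, hmerge⟩

theorem card_missed_lt_of_invariant {Z : Finset Q} (hne : Z.Nonempty)
    (hZ : ∀ s, ∀ q ∈ Z, act s q ∈ Z) (hmissed : ∀ s, missed act [s] ⊆ Z) (w : List A) :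
    (missed act w).card < Z.card := by
  obtain ⟨q₀, hq₀⟩ := hne
  have hsub : missed act w ⊆ Z ∧ wordMap act w q₀ ∈ Z := by
    induction w using List.reverseRecOn with
    | nil => exact ⟨by simp [missed_nil], hq₀⟩
    | append_singleton w s ih =>
      refine ⟨fun q hq => ?_, wordMap_append act w [s] q₀ ▸ hZ s _ ih.2⟩
      by_cases hs : q ∈ missed act [s]
      · exact hmissed s hs
      · obtain ⟨p, rfl⟩ : ∃ p, act s p = q := by simpa [mem_missed, wordMap] using hs
        exact hZ s p (ih.1 (mem_missed_append.1 hq p rfl))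
  refine Finset.card_lt_card ⟨hsub.1, fun h => ?_⟩
  exact mem_missed.1 (h hsub.2) q₀ rfl

theorem exists_length_le_choose_and_card_missed_lt_append (u : List A)
    (h : ∃ w, (missed act u).card < (missed act w).card) :
    ∃ v : List A, v.length ≤ ((missed act u).card + 2).choose 2 ∧
      (missed act u).card < (missed act (u ++ v)).card := by
  obtain ⟨v, hv, hmin⟩ := (measure List.length).wf.has_min
    {v | (missed act u).card < (missed act (u ++ v)).card}
    (h.imp fun w hw => hw.trans_le (Finset.card_le_card (missed_subset_append u w)))
  refine ⟨v, ?_, hv⟩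
  have hshorter {v' : List A} (hlen : v'.length < v.length) :
      (missed act (u ++ v')).card = (missed act u).card :=
    (not_lt.1 fun hlt => hmin v' hlt hlen).antisymm (card_missed_le_append u v')
  obtain ⟨p, q, hp, hq, hpq, hmerge⟩ := exists_wordMap_eq_of_card_missed_lt hv
  have hne (j : Fin v.length) : wordMap act (v.take j) p ≠ wordMap act (v.take j) q := fun heq =>
    (mem_missed_or_mem_missed_of_wordMap_eq hpq heq (hshorter (by simp)).le).elim hp hq
  have hskew := card_le_choose_of_skew_cross_intersecting (b := 2)
    (fun j : Fin v.length => missed act (u ++ v.take j))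
    (fun j => {wordMap act (v.take j) p, wordMap act (v.take j) q})
    (fun j => hshorter (by simp)) (fun j => Finset.card_pair (hne j))
    (fun j => by simp [wordMap_notMem_missed_append, hp, hq]) fun j k hjk => ?_
  · rwa [Fintype.card_fin, Nat.choose_symm_add] at hskew
  · have hhit := mem_missed_or_mem_missed_of_wordMap_eq (u := u ++ v.take j) (v := v.drop k)
      (hne k)
      (by rw [← wordMap_append, ← wordMap_append, List.take_append_drop, hmerge]) (by
        rw [List.append_assoc, hshorter (by simp; omega), hshorter (by simp)])
    rw [Finset.not_disjoint_iff]
    rcases hhit with hhit | hhit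
    · exact ⟨_, hhit, by simp⟩
    · exact ⟨_, hhit, by simp⟩

theorem exists_length_le_choose_and_le_card_missed (c : ℕ) (h : ∃ w, c ≤ (missed act w).card) :
    ∃ w : List A, w.length ≤ (c + 2).choose 3 ∧ c ≤ (missed act w).card := by
  induction c with
  | zero => exact ⟨[], by simp⟩
  | succ c ih =>
    obtain ⟨u, hlen, hu⟩ := ih (h.imp fun w hw => by omega)
    have hchoose : (c + 1 + 2).choose 3 = (c + 2).choose 2 + (c + 2).choose 3 :=
      Nat.choose_succ_succ' (c + 2) 2
    rcases hu.lt_or_eq with hlt | heq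
    · exact ⟨u, by omega, hlt⟩
    · obtain ⟨v, hv, hlt⟩ := exists_length_le_choose_and_card_missed_lt_append u (by rwa [← heq])
      refine ⟨u ++ v, ?_, heq ▸ hlt⟩
      rw [← heq] at hv
      simp only [List.length_append]
      omega

theorem missed_singleton_nonempty_iff {s : A} :
    (missed act [s]).Nonempty ↔ ¬Function.Injective (act s) := by
  simp [Finset.Nonempty, mem_missed, wordMap, Finite.injective_iff_surjective,
    Function.Surjective]

theorem apply_mem_missed_append_iff {s : A} (hs : Function.Injective (act s)) {u : List A} {q : Q} :
    act s q ∈ missed act (u ++ [s]) ↔ q ∈ missed act u := by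
  simp [mem_missed_append, wordMap, hs.eq_iff]

/-- The shape forced on the letters of an automaton when no word of length at most three misses two
states although some longer word does: `o` is what the non-injective letters miss, they merge only
`o` and `i`, and injective letters lead from `o` to `i` and from `i` to `t`. -/
structure IsTwoTight (act : A → Q → Q) (o i t : Q) : Prop where
  o_ne_i : o ≠ i
  t_ne_o : t ≠ o
  t_ne_i : t ≠ i
  merge_eq {s : A} {x y : Q} : act s x = act s y → x ≠ y → s(x, y) = s(o, i)
  missed_eq {s : A} : ¬Function.Injective (act s) → missed act [s] = {o}
  apply_o {s : A} : Function.Injective (act s) → act s o = o ∨ act s o = i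
  exists_apply_o_eq : ∃ s, Function.Injective (act s) ∧ act s o = i
  exists_apply_i_eq : ∃ s, Function.Injective (act s) ∧ act s i = t
  exists_not_injective : ∃ s, ¬Function.Injective (act s)

theorem injective_and_apply_eq_of_missed_append {u : List A} {s : A} {p q : Q}
    (hp : missed act u = {p}) (hq : missed act (u ++ [s]) = {q}) (hs : q ∉ missed act [s]) :
    Function.Injective (act s) ∧ act s p = q := by
  have hinj : Function.Injective (act s) := not_not.1 fun hninj => by
    obtain ⟨r, hr⟩ := missed_singleton_nonempty_iff.2 hninj
    have hrq : r = q := by simpa [hq] using missed_subset_append u [s] hr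
    exact hs (hrq ▸ hr)
  refine ⟨hinj, ?_⟩
  simpa [hq] using (apply_mem_missed_append_iff hinj (u := u) (q := p)).2 (by simp [hp])

theorem exists_letters_of_card_missed_le_one
    (hthree : ∀ w : List A, w.length ≤ 3 → (missed act w).card ≤ 1)
    (hex : ∃ w, 2 ≤ (missed act w).card) :
    ∃ a s₁ s₂ s₃, (missed act [a]).card = 1 ∧
      (missed act [a]).card < (missed act ([a] ++ [s₁, s₂, s₃])).card := by
  obtain ⟨w, hw⟩ := hex
  obtain ⟨v₁, hv₁, hlt₁⟩ := exists_length_le_choose_and_card_missed_lt_append (act := act) []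
    ⟨w, by rw [missed_nil]; exact two_pos.trans_le hw⟩
  simp only [missed_nil, Finset.card_empty, zero_add, Nat.choose_self, List.nil_append] at hv₁ hlt₁
  obtain ⟨a, rfl⟩ : ∃ a, v₁ = [a] := by
    refine List.length_eq_one_iff.1 (hv₁.antisymm (List.length_pos_iff.2 ?_))
    rintro rfl
    simp [missed_nil] at hlt₁
  have ha : (missed act [a]).card = 1 := (hthree [a] (by simp)).antisymm hlt₁
  obtain ⟨v, hv, hlt⟩ :=
    exists_length_le_choose_and_card_missed_lt_append [a] ⟨w, by rw [ha]; exact hw⟩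
  obtain ⟨s₁, s₂, s₃, rfl⟩ : ∃ s₁ s₂ s₃, v = [s₁, s₂, s₃] := by
    rw [ha] at hv hlt
    refine List.length_eq_three.1 (hv.antisymm (not_lt.1 fun hlen => ?_))
    exact hlt.not_ge (hthree ([a] ++ v) (by rw [List.length_append]; simpa [add_comm] using hlen))
  exact ⟨a, s₁, s₂, s₃, ha, hlt⟩

theorem exists_missed_eq_singleton (hthree : ∀ w : List A, w.length ≤ 3 → (missed act w).card ≤ 1)
    (hex : ∃ w, 2 ≤ (missed act w).card) :
    ∃ a s₁ s₂ s₃ o i t, missed act [a] = {o} ∧ missed act [a, s₁] = {i} ∧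
      missed act [a, s₁, s₂] = {t} ∧ act s₃ o = act s₃ i ∧ o ≠ i ∧ t ≠ o ∧ t ≠ i := by
  obtain ⟨a, s₁, s₂, s₃, ha, hlt⟩ := exists_letters_of_card_missed_le_one hthree hex
  obtain ⟨o, ho⟩ := Finset.card_eq_one.1 ha
  obtain ⟨i, hi⟩ := Finset.card_eq_one.1
    ((hthree [a, s₁] (by simp)).antisymm (ha ▸ card_missed_le_append [a] [s₁]))
  obtain ⟨t, ht⟩ := Finset.card_eq_one.1
    ((hthree [a, s₁, s₂] (by simp)).antisymm (ha ▸ card_missed_le_append [a] [s₁, s₂]))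
  have hhit {u v : List A} {p q r : Q} (hu : missed act u = {r}) (hlen : (u ++ v).length ≤ 3)
      (hpq : p ≠ q) (hmerge : wordMap act v p = wordMap act v q) : p = r ∨ q = r := by
    simpa [hu] using mem_missed_or_mem_missed_of_wordMap_eq hpq hmerge
      ((hthree _ hlen).trans (by simp [hu]))
  obtain ⟨x, y, hx, hy, hxy, hmerge⟩ := exists_wordMap_eq_of_card_missed_lt hlt
  have hx₁ := wordMap_notMem_missed_append hx [s₁]
  have hy₁ := wordMap_notMem_missed_append hy [s₁]
  have hx₂ := wordMap_notMem_missed_append hx [s₁, s₂]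
  have hy₂ := wordMap_notMem_missed_append hy [s₁, s₂]
  rw [ho, Finset.mem_singleton] at hx hy
  have hne₁ : act s₁ x ≠ act s₁ y := fun heq =>
    (hhit (v := [s₁]) ho (by simp) hxy heq).elim hx hy
  have hne₂ : act s₂ (act s₁ x) ≠ act s₂ (act s₁ y) := fun heq =>
    (hhit (v := [s₁, s₂]) ho (by simp) hxy heq).elim hx hy
  have ho₁ := hhit (v := [s₂, s₃]) ho (by simp) hne₁ hmerge
  have ho₂ := hhit (v := [s₃]) ho (by simp) hne₂ hmerge
  have hi₂ := hhit (v := [s₃]) hi (by simp) hne₂ hmerge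
  refine ⟨a, s₁, s₂, s₃, o, i, t, ho, hi, ht, ?_⟩
  simp only [wordMap, List.foldl_cons, List.foldl_nil, List.cons_append, List.nil_append, hi, ht,
    Finset.mem_singleton] at hx₁ hy₁ hx₂ hy₂ hmerge
  grind

theorem exists_isTwoTight (hthree : ∀ w : List A, w.length ≤ 3 → (missed act w).card ≤ 1)
    (hex : ∃ w, 2 ≤ (missed act w).card) : ∃ o i t, IsTwoTight act o i t := by
  obtain ⟨a, s₁, s₂, s₃, o, i, t, ho, hi, ht, hmerge, hoi, hto, hti⟩ :=
    exists_missed_eq_singleton hthree hex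
  have hhit {u : List A} {s : A} {p q : Q} (hu : (missed act u).Nonempty) (hlen : u.length ≤ 2)
      (hpq : p ≠ q) (heq : act s p = act s q) : p ∈ missed act u ∨ q ∈ missed act u :=
    mem_missed_or_mem_missed_of_wordMap_eq (v := [s]) hpq heq
      ((hthree _ (by simp; omega)).trans hu.card_pos)
  have hsub {w : List A} (hw : w.length ≤ 2) {q : Q} (hq : q ∈ missed act w) : q = o ∨ q = i :=
    have huniq := Finset.card_le_one.1 (hthree w (by omega))
    (hhit ⟨q, hq⟩ hw hoi hmerge).imp (huniq q hq o) (huniq q hq i)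
  have htmissed {w : List A} (hw : w.length ≤ 2) : t ∉ missed act w := fun h =>
    (hsub hw h).elim hto hti
  obtain ⟨hs₂, hit⟩ := injective_and_apply_eq_of_missed_append (u := [a, s₁]) hi ht
    (htmissed (by simp))
  have hnoti (s : A) : i ∉ missed act [s] := fun his =>
    htmissed (w := [s] ++ [s₂]) (by simp) (hit ▸ (apply_mem_missed_append_iff hs₂).2 his)
  obtain ⟨hs₁, hoi'⟩ := injective_and_apply_eq_of_missed_append (u := [a]) ho hi (hnoti s₁)
  refine ⟨o, i, t, hoi, hto, hti, fun {s x y} heq hxy => ?_, fun {s} hs => ?_, fun {s} hs => ?_,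
    ⟨s₁, hs₁, hoi'⟩, ⟨s₂, hs₂, hit⟩, s₃, fun h => hoi (h hmerge)⟩
  · have hho := hhit (u := [a]) (by simp [ho]) (by simp) hxy heq
    have hhi := hhit (u := [a, s₁]) (by simp [hi]) (by simp) hxy heq
    simp only [ho, hi, Finset.mem_singleton] at hho hhi
    grind
  · refine Finset.eq_singleton_iff_nonempty_unique_mem.2
      ⟨missed_singleton_nonempty_iff.2 hs, fun q hq => ?_⟩
    exact (hsub (by simp) hq).resolve_right fun h => hnoti s (h ▸ hq)
  · exact hsub (w := [a] ++ [s]) (by simp) ((apply_mem_missed_append_iff hs).2 (by simp [ho]))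

variable (act) in
/-- The graph on the states whose edges are the pairs missed by a common word of length at most
`l`. -/
def missedGraph (l : ℕ) : SimpleGraph Q where
  Adj x y := x ≠ y ∧ ∃ w : List A, w.length ≤ l ∧ x ∈ missed act w ∧ y ∈ missed act w
  symm := ⟨fun _ _ ⟨hne, w, hlen, hx, hy⟩ => ⟨hne.symm, w, hlen, hy, hx⟩⟩
  loopless := ⟨fun _ h => h.1 rfl⟩

variable (act) in
/-- The states missed by some word of length at most `l`. -/
def missedWithin (l : ℕ) : Set Q :=
  {q | ∃ w : List A, w.length ≤ l ∧ q ∈ missed act w}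

theorem missedGraph_mono : Monotone (missedGraph act) := fun _ _ hlm _ _ ⟨hne, w, hlen, h⟩ =>
  ⟨hne, w, hlen.trans hlm, h⟩

theorem mem_missedWithin_of_adj {l : ℕ} {x y : Q} (h : (missedGraph act l).Adj x y) :
    y ∈ missedWithin act l :=
  let ⟨_, w, hlen, _, hy⟩ := h
  ⟨w, hlen, hy⟩

theorem apply_mem_missedWithin {s : A} (hs : Function.Injective (act s)) {l : ℕ} {q : Q}
    (hq : q ∈ missedWithin act l) : act s q ∈ missedWithin act (l + 1) := by
  obtain ⟨w, hlen, hq⟩ := hq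
  exact ⟨w ++ [s], by simpa using hlen, (apply_mem_missed_append_iff hs).2 hq⟩

theorem missedGraph_adj_apply {s : A} (hs : Function.Injective (act s)) {l : ℕ} {x y : Q}
    (h : (missedGraph act l).Adj x y) : (missedGraph act (l + 1)).Adj (act s x) (act s y) := by
  obtain ⟨hne, w, hlen, hx, hy⟩ := h
  exact ⟨hs.ne hne, w ++ [s], by simpa using hlen, (apply_mem_missed_append_iff hs).2 hx,
    (apply_mem_missed_append_iff hs).2 hy⟩

theorem isVertexCover_missedGraph_of_wordMap_eq {l m : ℕ}
    (htwo : ∀ w : List A, w.length ≤ m → (missed act w).card ≤ 2) {v : List A} {x y : Q}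
    (hxy : x ≠ y) (hmerge : wordMap act v x = wordMap act v y) (hlen : l + v.length ≤ m) :
    (missedGraph act l).IsVertexCover {x, y} := by
  rintro p q ⟨hpq, w, hw, hp, hq⟩
  have hsub : {p, q} ⊆ missed act w := by simp [Finset.insert_subset_iff, hp, hq]
  have hmissed : {p, q} = missed act w := Finset.eq_of_subset_of_card_le hsub (by
    rw [Finset.card_pair hpq]
    exact htwo w (by omega))
  have hhit := mem_missed_or_mem_missed_of_wordMap_eq (u := w) hxy hmerge
    ((htwo _ (by simp; omega)).trans (by rw [← hmissed, Finset.card_pair hpq]))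
  simp only [← hmissed, Finset.mem_insert, Finset.mem_singleton] at hhit
  simp only [Set.mem_insert_iff, Set.mem_singleton_iff]
  grind

theorem not_isVertexCover_missedGraph {u : List A} (hu : 2 ≤ (missed act u).card) {x y : Q}
    (hx : x ∉ missed act u) (hy : y ∉ missed act u) {l : ℕ} (hl : u.length ≤ l) :
    ¬(missedGraph act l).IsVertexCover {x, y} := fun hcover => by
  obtain ⟨p, hp, q, hq, hpq⟩ := Finset.one_lt_card.1 hu
  rcases hcover ⟨hpq, u, hl, hp, hq⟩ with h | h <;>
    grind only [Set.mem_insert_iff, Set.mem_singleton_iff]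

theorem exists_merging_pairs {u : List A} (hu : u.length ≤ 4) (htwo : 2 ≤ (missed act u).card)
    (hnine : ∀ w : List A, w.length ≤ 9 → (missed act w).card ≤ 2)
    (hex : ∃ w, 3 ≤ (missed act w).card) :
    ∃ P : ℕ → Sym2 Q, (∀ k < 6, ¬(P k).IsDiag ∧
        (missedGraph act (k + 3)).IsVertexCover (P k) ∧
        ¬(missedGraph act (k + 4)).IsVertexCover (P k)) ∧
      (∀ k < 6, ∃ s, (P k).map (act s) = P (k + 1)) ∧ (P 6).IsDiag := by
  have hcard : (missed act u).card = 2 := (hnine u (by omega)).antisymm htwo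
  obtain ⟨v, hv, hlt⟩ := exists_length_le_choose_and_card_missed_lt_append u
    (hex.imp fun w hw => by rw [hcard]; exact hw)
  have hv6 : v.length = 6 := (hv.trans_eq (by rw [hcard]; rfl)).antisymm <| not_lt.1 fun hlen => by
    have := hnine (u ++ v) (by simp; omega)
    omega
  obtain ⟨x, y, hx, hy, hxy, hmerge⟩ := exists_wordMap_eq_of_card_missed_lt hlt
  refine ⟨fun k => s(wordMap act (v.take k) x, wordMap act (v.take k) y),
    fun k hk => ?_, fun k hk => ⟨v[k], ?_⟩, by simpa [← hv6] using hmerge⟩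
  · have hne : wordMap act (v.take k) x ≠ wordMap act (v.take k) y := fun heq =>
      (mem_missed_or_mem_missed_of_wordMap_eq hxy heq
        ((hnine (u ++ v.take k) (by simp; omega)).trans htwo)).elim hx hy
    rw [Sym2.coe_mk]
    refine ⟨hne, isVertexCover_missedGraph_of_wordMap_eq hnine (v := v.drop k) hne ?_
      (by simp; omega), not_isVertexCover_missedGraph (htwo.trans (card_missed_le_append u _))
      (wordMap_notMem_missed_append hx _) (wordMap_notMem_missed_append hy _) (by simp; omega)⟩
    rw [← wordMap_append, ← wordMap_append, List.take_append_drop, hmerge]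
  · simp only [List.take_succ_eq_append_getElem (show k < v.length by omega), wordMap_append]
    rfl

theorem eq_singleton_and_eq_pair_of_ssubset {α : Type*} {E F G : Set α} {x y z : α} (hEF : E ⊂ F)
    (hFG : F ⊂ G) (hG : G ⊆ {x, y, z}) (hx : x ∈ E) :
    E = {x} ∧ (F = {x, y} ∨ F = {x, z}) ∧ G = {x, y, z} := by
  obtain ⟨hEF, u, huF, huE⟩ := Set.ssubset_iff_exists.1 hEF
  obtain ⟨hFG, v, hvG, hvF⟩ := Set.ssubset_iff_exists.1 hFG
  simp only [Set.subset_def, Set.ext_iff, Set.mem_insert_iff, Set.mem_singleton_iff] at *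
  grind

theorem edgeSet_subset_of_isVertexCover {V : Type*} {G H : SimpleGraph V} (hGH : G ≤ H)
    {o i z x y : V} (hiz : i ≠ z)
    (hi : H.IsVertexCover {o, i}) (hz : H.IsVertexCover {o, z})
    (hG : G.IsVertexCover {x, y}) (hH : ¬H.IsVertexCover {x, y}) (ho : ¬G.IsVertexCover {o}) :
    x ≠ o ∧ y ≠ o ∧ G.edgeSet ⊆ {s(o, x), s(o, y), s(i, z)} := by
  have hedge {p q : V} (hpq : H.Adj p q) : p = o ∨ q = o ∨ s(p, q) = s(i, z) := by
    have := hi hpq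
    have := hz hpq
    simp only [Set.mem_insert_iff, Set.mem_singleton_iff] at *
    grind
  obtain ⟨p, q, hpq, hp, hq⟩ : ∃ p q, G.Adj p q ∧ p ≠ o ∧ q ≠ o := by
    simpa [SimpleGraph.IsVertexCover, not_or] using ho
  have hpqz := hedge (hGH hpq)
  have hne {y : V} (hy : G.IsVertexCover {o, y}) : H.IsVertexCover {o, y} := by
    have hpqy := hy hpq
    have hyz : y = i ∨ y = z := by
      simp only [Set.mem_insert_iff, Set.mem_singleton_iff] at hpqy
      grind
    rcases hyz with rfl | rfl
    exacts [hi, hz]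
  have hxo : x ≠ o := by
    rintro rfl
    exact hH (hne hG)
  have hyo : y ≠ o := by
    rintro rfl
    exact hH (Set.pair_comm y x ▸ hne (Set.pair_comm x y ▸ hG))
  refine ⟨hxo, hyo, ?_⟩
  rintro ⟨p, q⟩ hpq
  have := hedge (hGH hpq)
  have := hG hpq
  simp only [Set.mem_insert_iff, Set.mem_singleton_iff] at *
  grind

namespace IsTwoTight

variable {o i t : Q}

theorem apply_o_eq_apply_i (h : IsTwoTight act o i t) {b : A}
    (hb : ¬Function.Injective (act b)) : act b o = act b i := by
  obtain ⟨x, y, hxy, hne⟩ := Function.not_injective_iff.1 hb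
  have := h.merge_eq hxy hne
  grind

theorem adj_o_apply_of_forall_mem_missed (h : IsTwoTight act o i t) {b : A}
    (hb : ¬Function.Injective (act b)) {l : ℕ} {w : List A} (hw : w.length ≤ l) {q : Q}
    (hq : ∀ p, act b p = act b q → p ∈ missed act w) :
    (missedGraph act (l + 1)).Adj o (act b q) := by
  have ho : o ∈ missed act [b] := by simp [h.missed_eq hb]
  exact ⟨(mem_missed.1 ho q).symm, w ++ [b], by simpa using hw, missed_subset_append w [b] ho,
    mem_missed_append.2 hq⟩

theorem adj_o_apply (h : IsTwoTight act o i t) {b : A} (hb : ¬Function.Injective (act b)) {l : ℕ}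
    {q : Q} (hqo : q ≠ o) (hqi : q ≠ i) (hq : q ∈ missedWithin act l) :
    (missedGraph act (l + 1)).Adj o (act b q) := by
  obtain ⟨w, hlen, hq⟩ := hq
  refine h.adj_o_apply_of_forall_mem_missed hb hlen fun p hp => ?_
  have := h.merge_eq hp
  grind

theorem adj_o_apply_o (h : IsTwoTight act o i t) {b : A} (hb : ¬Function.Injective (act b))
    {l : ℕ} (hoi : (missedGraph act l).Adj o i) : (missedGraph act (l + 1)).Adj o (act b o) := by
  obtain ⟨-, w, hlen, hwo, hwi⟩ := hoi
  refine h.adj_o_apply_of_forall_mem_missed hb hlen fun p hp => ?_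
  have := h.merge_eq hp
  grind

theorem i_mem_missedWithin (h : IsTwoTight act o i t) : i ∈ missedWithin act 2 := by
  obtain ⟨b, hb⟩ := h.exists_not_injective
  obtain ⟨s, hs, hoi⟩ := h.exists_apply_o_eq
  exact hoi ▸ apply_mem_missedWithin hs ⟨[b], by simp, by simp [h.missed_eq hb]⟩

theorem t_mem_missedWithin (h : IsTwoTight act o i t) : t ∈ missedWithin act 3 := by
  obtain ⟨s, hs, hit⟩ := h.exists_apply_i_eq
  exact hit ▸ apply_mem_missedWithin hs h.i_mem_missedWithin

theorem adj_o_apply_t (h : IsTwoTight act o i t) {b : A} (hb : ¬Function.Injective (act b)) :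
    (missedGraph act 4).Adj o (act b t) :=
  h.adj_o_apply hb h.t_ne_o h.t_ne_i h.t_mem_missedWithin

theorem card_missed_le_two (h : IsTwoTight act o i t) {l : ℕ} (hl : 4 ≤ l)
    (hoi : (missedGraph act l).Adj o i) (hot : (missedGraph act l).Adj o t)
    (hclosed : ∀ {x y}, (missedGraph act (l + 1)).Adj x y → y ∈ ({o, i, t} : Finset Q))
    (w : List A) : (missed act w).card ≤ 2 := by
  have hmissed (s : A) : missed act [s] ⊆ {o, i, t} := by
    by_cases hs : Function.Injective (act s)
    · simp [Finset.not_nonempty_iff_eq_empty.1 (missed_singleton_nonempty_iff.not_left.2 hs)]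
    · simp [h.missed_eq hs]
  have happly (s : A) : ∀ q ∈ ({o, i, t} : Finset Q), act s q ∈ ({o, i, t} : Finset Q) := by
    simp only [Finset.forall_mem_insert, Finset.mem_singleton, forall_eq]
    by_cases hs : Function.Injective (act s)
    · have hoi' := missedGraph_adj_apply hs hoi
      exact ⟨hclosed hoi'.symm, hclosed hoi', hclosed (missedGraph_adj_apply hs hot)⟩
    · have ho := hclosed (h.adj_o_apply_o hs hoi)
      exact ⟨ho, h.apply_o_eq_apply_i hs ▸ ho,
        hclosed (missedGraph_mono (by omega) (h.adj_o_apply_t hs))⟩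
  exact Nat.lt_succ_iff.1 <|
    (card_missed_lt_of_invariant ⟨o, by simp⟩ happly hmissed w).trans_le Finset.card_le_three

theorem not_isVertexCover_singleton (h : IsTwoTight act o i t) {l : ℕ} {e : Q}
    (hadj : (missedGraph act l).Adj o e) (hlt : missedGraph act l < missedGraph act (l + 1)) :
    ¬(missedGraph act (l + 2)).IsVertexCover {o} := fun hcover => by
  obtain ⟨T, hT, hTo⟩ := h.exists_apply_o_eq
  obtain ⟨r, hr⟩ := Finite.surjective_of_injective hT o
  have hoi := h.o_ne_i
  have hedge {x y : Q} (hxy : (missedGraph act (l + 1)).Adj x y) : s(x, y) = s(o, r) := by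
    have hcover₁ := hcover (missedGraph_mono (Nat.le_succ _) hxy)
    have hcover₂ := hcover (missedGraph_adj_apply hT hxy)
    simp only [Set.mem_singleton_iff] at hcover₁ hcover₂
    have := hT (a₁ := r)
    grind
  refine hlt.not_ge fun x y hxy => ?_
  rw [← SimpleGraph.mem_edgeSet, hedge hxy, ← hedge (hlt.le hadj)]
  exact hadj

theorem eq_t_of_apply_eq_apply_t (h : IsTwoTight act o i t) {s : A} {q : Q}
    (hq : act s q = act s t) : q = t := by
  have := h.merge_eq hq
  have := h.t_ne_o
  have := h.t_ne_i
  grind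

theorem apply_i_eq_or (h : IsTwoTight act o i t) {e : Q}
    (hadj : (missedGraph act 4).edgeSet = {s(o, e)}) {s : A} (hs : Function.Injective (act s)) :
    act s i = o ∨ act s i = i ∨ act s i = t := by
  obtain ⟨b, hb⟩ := h.exists_not_injective
  by_contra! hne
  have hsi := h.adj_o_apply hb hne.1 hne.2.1 (apply_mem_missedWithin hs h.i_mem_missedWithin)
  have ht := h.adj_o_apply_t hb
  rw [← SimpleGraph.mem_edgeSet, hadj] at hsi ht
  have := h.eq_t_of_apply_eq_apply_t (s := b) (q := act s i)
  grind

theorem edgeSet_five_ne (h : IsTwoTight act o i t) {e z : Q} (hzo : z ≠ o) (hzi : z ≠ i)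
    (hfour : (missedGraph act 4).edgeSet = {s(o, e)}) :
    (missedGraph act 5).edgeSet ≠ {s(o, e), s(i, z)} := fun hfive => by
  have hadj₄ {x y : Q} : (missedGraph act 4).Adj x y ↔ s(x, y) = s(o, e) := by
    rw [← SimpleGraph.mem_edgeSet, hfour, Set.mem_singleton_iff]
  have hadj₅ {x y : Q} : (missedGraph act 5).Adj x y ↔ s(x, y) = s(o, e) ∨ s(x, y) = s(i, z) := by
    rw [← SimpleGraph.mem_edgeSet, hfive, Set.mem_insert_iff, Set.mem_singleton_iff]
  obtain ⟨b, hb⟩ := h.exists_not_injective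
  obtain ⟨s, hs, hit⟩ := h.exists_apply_i_eq
  have hoi := h.o_ne_i
  have hto := h.t_ne_o
  have hti := h.t_ne_i
  have hbt := hadj₄.1 (h.adj_o_apply_t hb)
  have hmerge {q : Q} := h.eq_t_of_apply_eq_apply_t (s := b) (q := q)
  have hoe : (missedGraph act 4).Adj o e := hadj₄.2 rfl
  have hei : e ≠ i := by
    rintro rfl
    have := hadj₅.1 (h.adj_o_apply_o hb hoe)
    grind
  have het : e = t := by
    have := hadj₅.1 (h.adj_o_apply hb hoe.ne' hei (mem_missedWithin_of_adj hoe))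
    grind
  have hst : act s t = z := by
    have := hadj₅.1 (missedGraph_adj_apply hs (het ▸ hoe))
    have := h.apply_o hs
    have := hs.ne hto
    grind
  have hzt : z = t := by
    have := hadj₅.1 (h.adj_o_apply hb hzo hzi
      (hst ▸ apply_mem_missedWithin hs h.t_mem_missedWithin))
    grind
  exact hti (hs (by rw [hst, hzt, hit]))

theorem eq_t_of_edgeSet_eq (h : IsTwoTight act o i t) {z : Q} (hzo : z ≠ o) (hzi : z ≠ i)
    (hz : z ∈ missedWithin act 4) (hfour : (missedGraph act 4).edgeSet = {s(o, i)})
    (hfive : (missedGraph act 5).edgeSet = {s(o, i), s(o, t)}) : z = t := by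
  have hadj₅ {x y : Q} : (missedGraph act 5).Adj x y ↔ s(x, y) = s(o, i) ∨ s(x, y) = s(o, t) := by
    rw [← SimpleGraph.mem_edgeSet, hfive, Set.mem_insert_iff, Set.mem_singleton_iff]
  obtain ⟨b, hb⟩ := h.exists_not_injective
  have hbt : act b t = i := by
    have := h.adj_o_apply_t hb
    rw [← SimpleGraph.mem_edgeSet, hfour] at this
    grind
  have hbo : act b o = t := by
    have := hadj₅.1 (h.adj_o_apply_o hb (SimpleGraph.mem_edgeSet _ |>.1 (hfour ▸ rfl)))
    have := h.eq_t_of_apply_eq_apply_t (s := b) (q := o)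
    have := h.t_ne_o
    grind
  have hbz : act b z = i := by
    have := hadj₅.1 (h.adj_o_apply hb hzo hzi hz)
    have := h.merge_eq (s := b) (x := z) (y := o)
    grind
  exact h.eq_t_of_apply_eq_apply_t (hbz.trans hbt.symm)

theorem apply_eq_of_edgeSet_eq (h : IsTwoTight act o i t) {e f z : Q} (hzo : z ≠ o) (hef : e ≠ f)
    (hfour : (missedGraph act 4).edgeSet = {s(o, e)})
    (hfive : (missedGraph act 5).edgeSet = {s(o, e), s(o, f)})
    (hsix : (missedGraph act 6).edgeSet = {s(o, e), s(o, f), s(i, z)}) {r : A}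
    (hr : Function.Injective (act r)) (hri : act r o = i) :
    act r e = o ∧ (e = i ∨ f = i) ∧ act r f = z := by
  have hoe : (missedGraph act 4).Adj o e := by simp [← SimpleGraph.mem_edgeSet, hfour]
  have hof : (missedGraph act 5).Adj o f := by simp [← SimpleGraph.mem_edgeSet, hfive]
  have hoe' := missedGraph_adj_apply hr hoe
  have hof' := missedGraph_adj_apply hr hof
  rw [← SimpleGraph.mem_edgeSet, hri, hfive] at hoe'
  rw [← SimpleGraph.mem_edgeSet, hri, hsix] at hof'
  simp only [Set.mem_insert_iff, Set.mem_singleton_iff] at hoe' hof'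
  have hoi := h.o_ne_i
  have hre : act r e = o ∧ (e = i ∨ f = i) := by grind
  have hrf : act r f ≠ o := fun hrf => hef (hr (hre.1.trans hrf.symm))
  exact ⟨hre.1, hre.2, by grind⟩

theorem eq_triangle_of_edgeSet_eq (h : IsTwoTight act o i t) {e f z : Q} (hzo : z ≠ o) (hzi : z ≠ i)
    (hef : e ≠ f) (hfour : (missedGraph act 4).edgeSet = {s(o, e)})
    (hfive : (missedGraph act 5).edgeSet = {s(o, e), s(o, f)})
    (hsix : (missedGraph act 6).edgeSet = {s(o, e), s(o, f), s(i, z)})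
    (hseven : (missedGraph act 7).IsVertexCover {o, i}) :
    z = t ∧ (e = i ∧ f = t ∨ e = t ∧ f = i) := by
  obtain ⟨r, hr, hri⟩ := h.exists_apply_o_eq
  obtain ⟨s, hs, hit⟩ := h.exists_apply_i_eq
  have hto := h.t_ne_o
  have hti := h.t_ne_i
  obtain ⟨hre, rfl | rfl, hrf⟩ := h.apply_eq_of_edgeSet_eq hzo hef hfour hfive hsix hr hri
  · have hft : f = t := by
      have hadj : (missedGraph act 4).Adj o e := by simp [← SimpleGraph.mem_edgeSet, hfour]
      have hadj := missedGraph_adj_apply hs hadj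
      rw [← SimpleGraph.mem_edgeSet, hfive] at hadj
      have := h.apply_o hs
      grind
    subst hft
    exact ⟨h.eq_t_of_edgeSet_eq hzo hzi (hrf ▸ apply_mem_missedWithin hr h.t_mem_missedWithin)
      hfour hfive, .inl ⟨rfl, rfl⟩⟩
  · have hzt : z = t := by
      have := h.apply_i_eq_or hfour hr
      grind
    have hrt : act r t = o := by
      have hadj : (missedGraph act 6).Adj f t := by simp [← SimpleGraph.mem_edgeSet, hsix, hzt]
      have hcover := hseven (missedGraph_adj_apply hr hadj)
      have hne := hr.ne hto
      simp only [Set.mem_insert_iff, Set.mem_singleton_iff] at hcover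
      grind
    exact ⟨hzt, .inr ⟨hr (hre.trans hrt.symm), rfl⟩⟩

theorem eq_of_isDiag_map (h : IsTwoTight act o i t) {s : A} {e : Sym2 Q} (he : ¬e.IsDiag)
    (hmap : (e.map (act s)).IsDiag) : e = s(o, i) := by
  induction e with
  | _ x y => exact h.merge_eq hmap he

theorem o_mem_of_map_eq (h : IsTwoTight act o i t) {s : A} {e : Sym2 Q}
    (he : e.map (act s) = s(o, i)) : o ∈ e := by
  have hs : Function.Injective (act s) := not_not.1 fun hs => by
    have ho : o ∈ missed act [s] := by simp [h.missed_eq hs]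
    obtain ⟨x, -, hx⟩ := Sym2.mem_map.1 (he ▸ Sym2.mem_mk_left o i)
    exact mem_missed.1 ho x hx
  have hso : act s o ∈ e.map (act s) := by
    rw [he]
    simpa using h.apply_o hs
  obtain ⟨x, hxe, hx⟩ := Sym2.mem_map.1 hso
  exact hs hx ▸ hxe

theorem exists_isVertexCover (h : IsTwoTight act o i t)
    (hnine : ∀ w : List A, w.length ≤ 9 → (missed act w).card ≤ 2)
    (hex : ∃ w, 3 ≤ (missed act w).card) :
    missedGraph act 4 < missedGraph act 5 ∧ missedGraph act 5 < missedGraph act 6 ∧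
      (missedGraph act 7).IsVertexCover {o, i} ∧
      (∃ z, z ≠ o ∧ z ≠ i ∧ (missedGraph act 7).IsVertexCover {o, z}) ∧
      ∃ x y, x ≠ y ∧ (missedGraph act 6).IsVertexCover {x, y} ∧
        ¬(missedGraph act 7).IsVertexCover {x, y} := by
  obtain ⟨b, hb⟩ := h.exists_not_injective
  obtain ⟨hne, u, hu, hou, htu⟩ := h.adj_o_apply_t hb
  obtain ⟨P, hP, hstep, hdiag⟩ :=
    exists_merging_pairs hu (Finset.one_lt_card.2 ⟨o, hou, _, htu, hne⟩) hnine hex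
  have hlt (k : ℕ) (hk : k < 6) : missedGraph act (k + 3) < missedGraph act (k + 4) :=
    (missedGraph_mono (Nat.le_succ _)).lt_of_not_ge fun hle =>
      (hP k hk).2.2 ((hP k hk).2.1.mono hle)
  have hfive : P 5 = s(o, i) := by
    obtain ⟨s, hs⟩ := hstep 5 (by simp)
    exact h.eq_of_isDiag_map (hP 5 (by simp)).1 (hs ▸ hdiag)
  obtain ⟨s, hs⟩ := hstep 4 (by simp)
  obtain ⟨z, hfour⟩ := h.o_mem_of_map_eq (hs.trans hfive)
  obtain ⟨-, hcover₅, -⟩ := hP 5 (by simp)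
  obtain ⟨hdiag₄, hcover₄, hncover₄⟩ := hP 4 (by simp)
  rw [hfive, Sym2.coe_mk] at hcover₅
  rw [hfour, Sym2.coe_mk] at hcover₄ hncover₄
  refine ⟨hlt 1 (by simp), hlt 2 (by simp), hcover₅.mono (missedGraph_mono (by simp)),
    ⟨z, ?_, ?_, hcover₄⟩, ?_⟩
  · rintro rfl
    exact hdiag₄ (hfour ▸ rfl)
  · rintro rfl
    exact hncover₄ hcover₅
  · have hthree := hP 3 (by simp)
    induction hxy : P 3 with
    | _ x y =>
      rw [hxy, Sym2.coe_mk] at hthree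
      exact ⟨x, y, hthree⟩

theorem exists_edgeSet_eq (h : IsTwoTight act o i t)
    (hnine : ∀ w : List A, w.length ≤ 9 → (missed act w).card ≤ 2)
    (hex : ∃ w, 3 ≤ (missed act w).card) :
    ∃ e f z, z ≠ o ∧ z ≠ i ∧ e ≠ f ∧ (missedGraph act 7).IsVertexCover {o, i} ∧
      (missedGraph act 4).edgeSet = {s(o, e)} ∧
      ((missedGraph act 5).edgeSet = {s(o, e), s(o, f)} ∨
        (missedGraph act 5).edgeSet = {s(o, e), s(i, z)}) ∧
      (missedGraph act 6).edgeSet = {s(o, e), s(o, f), s(i, z)} := by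
  obtain ⟨hlt₄, hlt₅, hcoveri, ⟨z, hzo, hzi, hcoverz⟩, x, y, hxy, hcover, hncover⟩ :=
    h.exists_isVertexCover hnine hex
  obtain ⟨b, hb⟩ := h.exists_not_injective
  have hadj := h.adj_o_apply_t hb
  have hle : missedGraph act 6 ≤ missedGraph act 7 := missedGraph_mono (Nat.le_succ 6)
  obtain ⟨hxo, hyo, hsub⟩ := edgeSet_subset_of_isVertexCover hle hzi.symm hcoveri hcoverz hcover
    hncover (h.not_isVertexCover_singleton hadj hlt₄)
  wlog hx : x = act b t generalizing x y
  · have hy : act b t = x ∨ act b t = y := by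
      have := hcover (missedGraph_mono (by simp) hadj)
      simp only [Set.mem_insert_iff, Set.mem_singleton_iff] at this
      grind
    exact this y x hxy.symm (Set.pair_comm x y ▸ hcover) (Set.pair_comm x y ▸ hncover) hyo hxo
      (Set.insert_comm _ _ _ ▸ hsub) (hy.resolve_left (Ne.symm hx)).symm
  obtain ⟨hfour, hfive, hsix⟩ := eq_singleton_and_eq_pair_of_ssubset
    (SimpleGraph.edgeSet_ssubset_edgeSet.2 hlt₄) (SimpleGraph.edgeSet_ssubset_edgeSet.2 hlt₅) hsub
    (hx ▸ hadj)
  exact ⟨x, y, z, hzo, hzi, hxy, hcoveri, hfour, hfive, hsix⟩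

theorem exists_length_le_nine_and_three_le_card_missed (h : IsTwoTight act o i t)
    (hex : ∃ w, 3 ≤ (missed act w).card) :
    ∃ w : List A, w.length ≤ 9 ∧ 3 ≤ (missed act w).card := by
  by_contra! hnine
  replace hnine (w : List A) (hw : w.length ≤ 9) := Nat.le_of_lt_succ (hnine w hw)
  obtain ⟨e, f, z, hzo, hzi, hef, hseven, hfour, hfive, hsix⟩ := h.exists_edgeSet_eq hnine hex
  replace hfive := hfive.resolve_right (h.edgeSet_five_ne hzo hzi hfour)
  obtain ⟨rfl, hef⟩ := h.eq_triangle_of_edgeSet_eq hzo hzi hef hfour hfive hsix hseven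
  obtain ⟨w, hw⟩ := hex
  have hadj₅ {x y : Q} : (missedGraph act 5).Adj x y ↔ s(x, y) = s(o, e) ∨ s(x, y) = s(o, f) := by
    rw [← SimpleGraph.mem_edgeSet, hfive, Set.mem_insert_iff, Set.mem_singleton_iff]
  refine hw.not_gt (Nat.lt_succ_of_le (h.card_missed_le_two (l := 5) (by simp) ?_ ?_ ?_ w))
  · grind
  · grind
  · intro x y hxy
    rw [← SimpleGraph.mem_edgeSet, hsix] at hxy
    simp only [Set.mem_insert_iff, Set.mem_singleton_iff] at hxy
    grind

end IsTwoTight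

theorem exists_length_le_nine_of_two_le_card_missed {u : List A} (hu : u.length ≤ 3)
    (htwo : 2 ≤ (missed act u).card) (hex : ∃ w, 3 ≤ (missed act w).card) :
    ∃ w : List A, w.length ≤ 9 ∧ 3 ≤ (missed act w).card := by
  rcases htwo.lt_or_eq with hlt | heq
  · exact ⟨u, by omega, hlt⟩
  · obtain ⟨v, hv, hlt⟩ := exists_length_le_choose_and_card_missed_lt_append u (by rwa [← heq])
    rw [← heq] at hv hlt
    have hv6 : v.length ≤ 6 := hv
    exact ⟨u ++ v, by simp only [List.length_append]; omega, hlt⟩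

theorem exists_length_le_sq_and_le_card_missed {c : ℕ} (hc : c ≤ 3)
    (hex : ∃ w, c ≤ (missed act w).card) :
    ∃ w : List A, w.length ≤ c ^ 2 ∧ c ≤ (missed act w).card := by
  rcases hc.lt_or_eq with hlt | rfl
  · obtain ⟨w, hlen, hw⟩ := exists_length_le_choose_and_le_card_missed c hex
    have hchoose : (c + 2).choose 3 ≤ c ^ 2 := by
      interval_cases c <;> decide
    exact ⟨w, hlen.trans hchoose, hw⟩
  · by_cases hthree : ∃ u : List A, u.length ≤ 3 ∧ 2 ≤ (missed act u).card
    · obtain ⟨u, hu, htwo⟩ := hthree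
      exact exists_length_le_nine_of_two_le_card_missed hu htwo hex
    · push Not at hthree
      obtain ⟨o, i, t, h⟩ := exists_isTwoTight (fun w hw => Nat.le_of_lt_succ (hthree w hw))
        (hex.imp fun w hw => (Nat.le_succ 2).trans hw)
      exact h.exists_length_le_nine_and_three_le_card_missed hex

end Words

theorem stmt_0 {Q A : Type*} [Fintype Q] [DecidableEq Q] (act : A → Q → Q)
    (c : ℕ) (hc : c ≤ 3)
    (h : ∃ w : List A, (wordImage act Finset.univ w).card ≤ Fintype.card Q - c) :
    ∃ w : List A, w.length ≤ c ^ 2 ∧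
      (wordImage act Finset.univ w).card ≤ Fintype.card Q - c := by
  rcases isEmpty_or_nonempty Q with hQ | hQ
  · exact ⟨[], by simp, by simp [wordImage]⟩
  · have hiff (w : List A) : (wordImage act Finset.univ w).card ≤ Fintype.card Q - c ↔
        c ≤ (missed act w).card := by
      have hpos : 0 < (wordImage act Finset.univ w).card := by
        simp [wordImage_eq_image_wordMap, Finset.univ_nonempty]
      have hcard := card_missed_add_card_wordImage act w
      omega
    simp only [hiff] at h ⊢
    exact exists_length_le_sq_and_le_card_missed hc h
end

section
/- Let (Q, Σ) be a DFA with n = |Q| ≤ 4. If there exists a word w over Σ such that |Qw| = 1, then there exists a word w over Σ with |w| ≤ (n−1)² and |Qw| = 1. -/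
/-!
Write `λ(R)` for the length of a shortest word sending `R` to a single state, and `ℓ(p, q)` for
`λ({p, q})`. Along a shortest word `λ` drops by one per letter, so the values of `ℓ` on pairs fill
an interval starting at `1`; hence `ℓ ≤ n.choose 2`, with `ℓ` injective on pairs in case of
equality. As some letter is not injective, this settles `n ≤ 3`.

Suppose `n = 4` and `λ(Q) > 9`. Then a shortest reset word passes through `Q`, `{a}ᶜ`, `{b}ᶜ`,
`{c}ᶜ` (lengths `9`, `8`, `7` for the last three) and a pair with `ℓ = 6`, so `ℓ` takes the values
`1, …, 6` once each. Every letter that is not injective merges exactly `a` and `b`, with image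
`{a}ᶜ`, and the lengths of the sets `{q}ᶜ` leave only a few permutations of the states for the
other letters. Since a letter decreases `ℓ` by at most one, each possible choice of letters
leading from `{a}ᶜ` to `{b}ᶜ` and from `{b}ᶜ` to `{c}ᶜ` is contradictory or forces `ℓ(a, c) = 2`,
`ℓ(b, c) = 3`, `ℓ(a, d) = 4`. A letter sending `{a, d}` to `{b, c}` then acts by `a ↦ b ↦ a` and
`d ↦ c`, which makes `ℓ(b, d) ≤ ℓ(a, c) + 1 = 3`: a contradiction.
-/

namespace Cerny

open Finset

variable {Q A : Type*} [DecidableEq Q] {act : A → Q → Q} {R S : Finset Q} {p q : Q}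

/-- The automaton is synchronizing: some word sends all states to a single one. -/
def IsSynchronizing [Fintype Q] (act : A → Q → Q) : Prop :=
  ∃ w : List A, #(wordImage act univ w) = 1

/-- The length of a shortest word sending `R` to a single state; it takes the value `0` if there is
no such word. -/
noncomputable def resetLength (act : A → Q → Q) (R : Finset Q) : ℕ :=
  sInf {k | ∃ w : List A, w.length = k ∧ #(wordImage act R w) = 1}

/-- The length of a shortest word merging the states `p` and `q`. -/
noncomputable def mergeLength (act : A → Q → Q) (p q : Q) : ℕ :=
  resetLength act {p, q}

lemma wordImage_mono (h : R ⊆ S) (w : List A) : wordImage act R w ⊆ wordImage act S w := by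
  induction w generalizing R S with
  | nil => exact h
  | cons s _ ih => exact ih (image_subset_image h)

lemma wordImage_nonempty (h : R.Nonempty) (w : List A) : (wordImage act R w).Nonempty := by
  induction w generalizing R with
  | nil => exact h
  | cons s _ ih => exact ih (h.image _)

lemma card_wordImage_of_injective (h : ∀ s, Function.Injective (act s)) (R : Finset Q)
    (w : List A) : #(wordImage act R w) = #R := by
  induction w generalizing R with
  | nil => rfl
  | cons s w ih => exact (ih _).trans (card_image_of_injective _ (h s))

lemma card_image_univ_lt [Fintype Q] {f : Q → Q} (hf : ¬ Function.Injective f) :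
    #(univ.image f) < Fintype.card Q :=
  card_image_le.lt_of_ne fun h => hf (by simpa using injOn_of_card_image_eq h)

lemma image_compl_singleton_of_injective [Fintype Q] {f : Q → Q} (hf : Function.Injective f)
    (q : Q) : ({q}ᶜ : Finset Q).image f = {f q}ᶜ := by
  rw [compl_singleton, image_erase hf,
    image_univ_of_surjective (Finite.surjective_of_injective hf), compl_singleton]

lemma exists_length_eq_resetLength (h : ∃ w, #(wordImage act R w) = 1) :
    ∃ w, w.length = resetLength act R ∧ #(wordImage act R w) = 1 := by
  obtain ⟨w, hw⟩ := h
  exact Nat.sInf_mem (s := {k | ∃ w : List A, w.length = k ∧ #(wordImage act R w) = 1})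
    ⟨w.length, w, rfl, hw⟩

lemma resetLength_le_length {w : List A} (h : #(wordImage act R w) = 1) :
    resetLength act R ≤ w.length :=
  Nat.sInf_le ⟨w, rfl, h⟩

lemma resetLength_eq_zero_of_card_eq_one (h : #R = 1) : resetLength act R = 0 :=
  Nat.le_zero.1 (resetLength_le_length (w := []) h)

lemma resetLength_le_resetLength_image_add_one {s : A}
    (h : ∃ w, #(wordImage act (R.image (act s)) w) = 1) :
    resetLength act R ≤ resetLength act (R.image (act s)) + 1 := by
  obtain ⟨w, hlen, hw⟩ := exists_length_eq_resetLength h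
  exact hlen ▸ resetLength_le_length (w := s :: w) hw

lemma exists_resetLength_image_eq {k : ℕ} (h : resetLength act R = k + 1) :
    ∃ s, resetLength act (R.image (act s)) = k := by
  obtain ⟨-, w, -, hw⟩ := Nat.nonempty_of_pos_sInf (h ▸ k.succ_pos : 0 < resetLength act R)
  obtain ⟨_ | ⟨s, v⟩, hlen, hv⟩ := exists_length_eq_resetLength ⟨w, hw⟩
  · simp [h] at hlen
  · have hle : resetLength act (R.image (act s)) ≤ v.length := resetLength_le_length hv
    have hge := resetLength_le_resetLength_image_add_one ⟨v, hv⟩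
    rw [List.length_cons, h] at hlen
    exact ⟨s, by omega⟩

lemma mergeLength_comm (act : A → Q → Q) (p q : Q) : mergeLength act p q = mergeLength act q p := by
  rw [mergeLength, mergeLength, pair_comm]

lemma resetLength_pos (hR : 2 ≤ #R) (h : ∃ w, #(wordImage act R w) = 1) :
    0 < resetLength act R := by
  refine Nat.pos_of_ne_zero fun hzero => ?_
  obtain ⟨w, hlen, hw⟩ := exists_length_eq_resetLength h
  rw [List.length_eq_zero_iff.1 (hlen.trans hzero), wordImage] at hw
  omega

lemma mergeLength_eq_one {s : A} (hpq : p ≠ q) (hs : act s p = act s q) :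
    mergeLength act p q = 1 := by
  have hreset : #(wordImage act {p, q} [s]) = 1 := by simp [wordImage, image_insert, hs]
  exact le_antisymm (resetLength_le_length hreset)
    (resetLength_pos (card_pair hpq).ge ⟨[s], hreset⟩)

section Pairs

lemma exists_card_eq_two_resetLength_eq (hR : #R = 2) {k : ℕ} (hk : 1 ≤ k)
    (hkR : k ≤ resetLength act R) : ∃ S : Finset Q, #S = 2 ∧ resetLength act S = k := by
  induction hn : resetLength act R generalizing R with
  | zero => omega
  | succ n ih =>
    rcases hkR.eq_or_lt with rfl | hlt
    · exact ⟨R, hR, rfl⟩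
    obtain ⟨s, hs⟩ := exists_resetLength_image_eq hn
    have hne : #(R.image (act s)) ≠ 1 := fun h => by
      have := resetLength_eq_zero_of_card_eq_one (act := act) h
      omega
    have hpos : 0 < #(R.image (act s)) := (card_pos.1 (hR ▸ two_pos)).image _ |>.card_pos
    have hle : #(R.image (act s)) ≤ 2 := hR ▸ card_image_le
    exact ih (by omega) (by omega) hs

variable [Fintype Q]

lemma Icc_one_resetLength_subset (hR : #R = 2) :
    Icc 1 (resetLength act R) ⊆ (powersetCard 2 univ).image (resetLength act) := by
  intro k hk
  obtain ⟨hk1, hkR⟩ := mem_Icc.1 hk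
  simpa [mem_powersetCard] using exists_card_eq_two_resetLength_eq hR hk1 hkR

theorem resetLength_le_choose_two (hR : #R = 2) :
    resetLength act R ≤ (Fintype.card Q).choose 2 :=
  calc resetLength act R = #(Icc 1 (resetLength act R)) := by simp
    _ ≤ #((powersetCard 2 univ).image (resetLength act)) :=
      card_le_card (Icc_one_resetLength_subset hR)
    _ ≤ #(powersetCard 2 (univ : Finset Q)) := card_image_le
    _ = (Fintype.card Q).choose 2 := by rw [card_powersetCard, card_univ]

theorem injOn_resetLength_of_choose_two_le (hR : #R = 2)
    (hmax : (Fintype.card Q).choose 2 ≤ resetLength act R) :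
    Set.InjOn (resetLength act) (powersetCard 2 (univ : Finset Q)) := by
  refine injOn_of_card_image_eq (card_image_le.antisymm ?_)
  calc #(powersetCard 2 (univ : Finset Q)) = (Fintype.card Q).choose 2 := by
        rw [card_powersetCard, card_univ]
    _ ≤ #(Icc 1 (resetLength act R)) := by simpa using hmax
    _ ≤ _ := card_le_card (Icc_one_resetLength_subset hR)

lemma resetLength_le_choose_two_of_card_le_two (hne : R.Nonempty) (hR : #R ≤ 2) :
    resetLength act R ≤ (Fintype.card Q).choose 2 := by
  have hpos := hne.card_pos
  obtain h1 | h2 : #R = 1 ∨ #R = 2 := by omega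
  · simp [resetLength_eq_zero_of_card_eq_one h1]
  · exact resetLength_le_choose_two h2

end Pairs

namespace IsSynchronizing

variable [Fintype Q] (hact : IsSynchronizing act)

include hact

lemma nonempty : Nonempty Q := by
  obtain ⟨w, hw⟩ := hact
  exact (card_pos.1 (hw ▸ one_pos)).to_type

lemma exists_card_wordImage_eq_one (hR : R.Nonempty) : ∃ w, #(wordImage act R w) = 1 := by
  obtain ⟨w, hw⟩ := hact
  exact ⟨w, le_antisymm (hw ▸ card_le_card (wordImage_mono (subset_univ R) w))
    (wordImage_nonempty hR w).card_pos⟩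

lemma resetLength_le (hR : R.Nonempty) (s : A) :
    resetLength act R ≤ resetLength act (R.image (act s)) + 1 :=
  resetLength_le_resetLength_image_add_one (hact.exists_card_wordImage_eq_one (hR.image _))

lemma mergeLength_le (s : A) (p q : Q) :
    mergeLength act p q ≤ mergeLength act (act s p) (act s q) + 1 := by
  simpa [mergeLength, image_insert] using hact.resetLength_le (insert_nonempty p {q}) s

lemma mergeLength_le_of_eq {s : A} {p q p' q' : Q} (hp : act s p = p') (hq : act s q = q') :
    mergeLength act p q ≤ mergeLength act p' q' + 1 :=
  hp ▸ hq ▸ hact.mergeLength_le s p q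

lemma mergeLength_le_of_eq_swap {s : A} {p q p' q' : Q} (hp : act s p = q') (hq : act s q = p') :
    mergeLength act p q ≤ mergeLength act p' q' + 1 :=
  mergeLength_comm act p' q' ▸ hact.mergeLength_le_of_eq hp hq

lemma mergeLength_pos (hpq : p ≠ q) : 0 < mergeLength act p q :=
  resetLength_pos (card_pair hpq).ge
    (hact.exists_card_wordImage_eq_one (insert_nonempty p {q}))

lemma exists_not_injective (hQ : 2 ≤ Fintype.card Q) : ∃ s, ¬ Function.Injective (act s) := by
  by_contra! hinj
  obtain ⟨w, hw⟩ := hact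
  rw [card_wordImage_of_injective hinj, card_univ] at hw
  omega

end IsSynchronizing

section FourStates

variable [Fintype Q]

/-- A labelling of the states of a four-state automaton without a reset word of length at most `9`.
The letters erase the states one by one: some letter merges `a` and `b`, and a shortest reset word
passes through `univ`, `{a}ᶜ`, `{b}ᶜ` and `{c}ᶜ` in this order. -/
structure IsSlow (act : A → Q → Q) (a b c d : Q) : Prop where
  isSynchronizing : IsSynchronizing act
  nodup : [a, b, c, d].Nodup
  eq_or : ∀ q, q = a ∨ q = b ∨ q = c ∨ q = d
  exists_merge : ∃ s, act s a = act s b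
  nine_lt : 9 < resetLength act univ
  resetLength_compl_a : resetLength act {a}ᶜ = 9
  resetLength_compl_b : resetLength act {b}ᶜ = 8
  resetLength_compl_c : resetLength act {c}ᶜ = 7

lemma resetLength_le_six (hQ : Fintype.card Q = 4) (hne : R.Nonempty) (hR : #R ≤ 2) :
    resetLength act R ≤ 6 := by
  have hle := resetLength_le_choose_two_of_card_le_two (act := act) hne hR
  rwa [hQ] at hle

lemma exists_eq_compl_singleton_of_lt_resetLength (hQ : Fintype.card Q = 4) (hne : R.Nonempty)
    (hR : #R < 4) (hlt : 6 < resetLength act R) : ∃ q, R = {q}ᶜ := by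
  have htwo : ¬ #R ≤ 2 := fun h => (resetLength_le_six hQ hne h).not_gt hlt
  have hone : #Rᶜ = 1 := by rw [card_compl]; omega
  obtain ⟨q, hq⟩ := card_eq_one.1 hone
  exact ⟨q, by rw [← hq, compl_compl]⟩

lemma resetLength_le_seven_of_merge (hQ : Fintype.card Q = 4) (hact : IsSynchronizing act) {s : A}
    (hpq : p ≠ q) (hs : act s p = act s q) {r : Q} (hp : p ≠ r) (hq : q ≠ r) :
    resetLength act {r}ᶜ ≤ 7 := by
  have hlt : #(({r}ᶜ : Finset Q).image (act s)) < #({r}ᶜ : Finset Q) :=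
    card_image_le.lt_of_ne fun h => hpq (injOn_of_card_image_eq h (by simpa) (by simpa) hs)
  have hne : ({r}ᶜ : Finset Q).Nonempty := ⟨p, by simpa⟩
  rw [card_compl, card_singleton, hQ] at hlt
  calc resetLength act {r}ᶜ ≤ resetLength act (({r}ᶜ : Finset Q).image (act s)) + 1 :=
        hact.resetLength_le hne s
    _ ≤ 6 + 1 := by
        gcongr
        exact resetLength_le_six hQ (hne.image _) (by omega)

lemma exists_merge_image_univ (hQ : Fintype.card Q = 4) (hact : IsSynchronizing act)
    (hslow : 9 < resetLength act univ) :
    ∃ s a b, a ≠ b ∧ act s a = act s b ∧ univ.image (act s) = {a}ᶜ := by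
  have : Nonempty Q := hact.nonempty
  obtain ⟨s, hs⟩ := hact.exists_not_injective (by omega)
  have hlt : #(univ.image (act s)) < 4 := hQ ▸ card_image_univ_lt hs
  have hlong := hact.resetLength_le univ_nonempty s
  obtain ⟨m, hm⟩ := exists_eq_compl_singleton_of_lt_resetLength (act := act) hQ
    (univ_nonempty.image (act s)) hlt (by omega)
  simp only [Function.Injective, not_forall] at hs
  obtain ⟨p, q, hpq, hne⟩ := hs
  by_cases hp : p = m
  · exact ⟨s, p, q, hne, hpq, hp ▸ hm⟩
  by_cases hq : q = m
  · exact ⟨s, q, p, Ne.symm hne, hpq.symm, hq ▸ hm⟩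
  have := resetLength_le_seven_of_merge hQ hact hne hpq hp hq
  rw [hm] at hlong
  omega

lemma exists_resetLength_compl_singleton_eq (hQ : Fintype.card Q = 4) {k : ℕ} (hk : 6 < k)
    (hp : resetLength act {p}ᶜ = k + 1) : ∃ q, resetLength act {q}ᶜ = k := by
  obtain ⟨s, hs⟩ := exists_resetLength_image_eq hp
  have hcard : #({p}ᶜ : Finset Q) = 3 := by rw [card_compl, card_singleton, hQ]
  have hne : ({p}ᶜ : Finset Q).Nonempty := card_pos.1 (by omega)
  have hle : #(({p}ᶜ : Finset Q).image (act s)) < 4 :=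
    Nat.lt_succ_of_le (hcard ▸ card_image_le)
  obtain ⟨q, hq⟩ := exists_eq_compl_singleton_of_lt_resetLength hQ (hne.image (act s)) hle
    (hs ▸ hk)
  exact ⟨q, hq ▸ hs⟩

theorem exists_isSlow (hQ : Fintype.card Q = 4) (hact : IsSynchronizing act)
    (hslow : 9 < resetLength act univ) : ∃ a b c d, IsSlow act a b c d := by
  have : Nonempty Q := hact.nonempty
  obtain ⟨s, a, b, hab, hs, hrange⟩ := exists_merge_image_univ hQ hact hslow
  have hother : ∀ q, 7 < resetLength act {q}ᶜ → q = a ∨ q = b := fun q hq => by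
    by_contra! hne
    have := resetLength_le_seven_of_merge hQ hact hab hs hne.1.symm hne.2.symm
    omega
  have ha : 9 ≤ resetLength act {a}ᶜ := by
    have := hact.resetLength_le univ_nonempty s
    rw [hrange] at this
    omega
  obtain ⟨k, hk⟩ : ∃ k, resetLength act {a}ᶜ = k + 2 := ⟨_, (Nat.sub_add_cancel (by omega)).symm⟩
  obtain ⟨b', hb'⟩ := exists_resetLength_compl_singleton_eq hQ (by omega) hk
  obtain rfl : b = b' :=
    ((hother b' (by omega)).resolve_left (by rintro rfl; omega)).symm
  obtain ⟨c, hc⟩ := exists_resetLength_compl_singleton_eq hQ (by omega) hb'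
  have hca : c ≠ a := by rintro rfl; omega
  have hcb : c ≠ b := by rintro rfl; omega
  have hc7 := resetLength_le_seven_of_merge hQ hact hab hs hca.symm hcb.symm
  have hcard : #({a, b, c} : Finset Q) = 3 :=
    card_eq_three.2 ⟨a, b, c, hab, hca.symm, hcb.symm, rfl⟩
  obtain ⟨d, hd⟩ : ∃ d, ({a, b, c} : Finset Q)ᶜ = {d} :=
    card_eq_one.1 (by rw [card_compl, hcard, hQ])
  have hmem : ∀ q, q = d ↔ q ≠ a ∧ q ≠ b ∧ q ≠ c := fun q => by
    simpa using (Finset.ext_iff.1 hd q).symm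
  obtain ⟨hda, hdb, hdc⟩ := (hmem d).1 rfl
  exact ⟨a, b, c, d, hact, by simp [hab, hca.symm, hcb.symm, hda.symm, hdb.symm, hdc.symm],
    fun q => by have := hmem q; tauto, ⟨s, hs⟩, hslow, by omega, by omega, by omega⟩

namespace IsSlow

variable {a b c d p q : Q} {s t : A} (h : IsSlow act a b c d)

include h

local notation "ℓ" => mergeLength act

lemma pairwise_ne : (a ≠ b ∧ a ≠ c ∧ a ≠ d) ∧ (b ≠ c ∧ b ≠ d) ∧ c ≠ d := by
  simpa using h.nodup

lemma card_eq_four : Fintype.card Q = 4 := by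
  have huniv : [a, b, c, d].toFinset = univ := eq_univ_of_forall fun q => by simpa using h.eq_or q
  rw [← card_univ, ← huniv, List.toFinset_card_of_nodup h.nodup]
  rfl

lemma resetLength_le_mergeLength_act (hs : act s a = act s b) (q : Q) :
    resetLength act {a, b, q} ≤ ℓ (act s b) (act s q) + 1 := by
  simpa [mergeLength, image_insert, hs] using
    h.isSynchronizing.resetLength_le (insert_nonempty a {b, q}) s

lemma compl_c_eq : ({c}ᶜ : Finset Q) = {a, b, d} := by
  ext q
  have := h.eq_or q
  have := h.pairwise_ne
  grind [mem_compl]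

lemma compl_d_eq : ({d}ᶜ : Finset Q) = {a, b, c} := by
  ext q
  have := h.eq_or q
  have := h.pairwise_ne
  grind [mem_compl]

lemma six_le_mergeLength (hs : act s a = act s b) : 6 ≤ ℓ (act s b) (act s d) := by
  have hle := h.resetLength_le_mergeLength_act hs d
  rw [← h.compl_c_eq, h.resetLength_compl_c] at hle
  omega

lemma mergeLength_le_six (p q : Q) : ℓ p q ≤ 6 :=
  resetLength_le_six h.card_eq_four (insert_nonempty p {q}) card_le_two

lemma mergeLength_eq_six (hs : act s a = act s b) : ℓ (act s b) (act s d) = 6 :=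
  le_antisymm (h.mergeLength_le_six _ _) (h.six_le_mergeLength hs)

lemma pair_eq_pair {p' q' : Q} (hpq : p ≠ q) (hpq' : p' ≠ q') (heq : ℓ p q = ℓ p' q') :
    p = p' ∧ q = q' ∨ p = q' ∧ q = p' := by
  obtain ⟨s, hs⟩ := h.exists_merge
  have hsix := h.six_le_mergeLength hs
  have hne : act s b ≠ act s d := fun he => by
    rw [he, mergeLength, pair_eq_singleton,
      resetLength_eq_zero_of_card_eq_one (card_singleton _)] at hsix
    omega
  have hinj := injOn_resetLength_of_choose_two_le (act := act) (card_pair hne)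
    (by simpa [h.card_eq_four, Nat.choose, mergeLength] using hsix)
  have hset : ({p, q} : Finset Q) = {p', q'} :=
    hinj (by simp [hpq]) (by simp [hpq']) heq
  rw [← coe_inj] at hset
  push_cast at hset
  exact Set.pair_eq_pair_iff.1 hset

lemma mergeLength_a_b : ℓ a b = 1 :=
  h.exists_merge.elim fun _ hs => mergeLength_eq_one h.pairwise_ne.1.1 hs

lemma eq_of_act_eq (hpq : p ≠ q) (hs : act s p = act s q) : p = a ∧ q = b ∨ p = b ∧ q = a :=
  h.pair_eq_pair hpq h.pairwise_ne.1.1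
    ((mergeLength_eq_one hpq hs).trans h.mergeLength_a_b.symm)

lemma act_eq_of_not_injective (hs : ¬ Function.Injective (act s)) : act s a = act s b := by
  simp only [Function.Injective, not_forall] at hs
  obtain ⟨p, q, hpq, hne⟩ := hs
  have := h.eq_of_act_eq hne hpq
  grind

lemma exists_not_injective : ∃ s, ¬ Function.Injective (act s) :=
  h.isSynchronizing.exists_not_injective (by rw [h.card_eq_four]; norm_num)

lemma image_univ_of_not_injective (hs : ¬ Function.Injective (act s)) :
    univ.image (act s) = {a}ᶜ := by
  have : Nonempty Q := h.isSynchronizing.nonempty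
  have hlt : #(univ.image (act s)) < 4 := h.card_eq_four ▸ card_image_univ_lt hs
  have hlong := h.isSynchronizing.resetLength_le univ_nonempty s
  have hslow := h.nine_lt
  obtain ⟨q, hq⟩ := exists_eq_compl_singleton_of_lt_resetLength (act := act) h.card_eq_four
    (univ_nonempty.image (act s)) hlt (by omega)
  rw [hq] at hlong ⊢
  have hb := h.resetLength_compl_b
  have hc := h.resetLength_compl_c
  obtain ⟨⟨hab, -, had⟩, ⟨-, hbd⟩, -⟩ := h.pairwise_ne
  have hd := resetLength_le_seven_of_merge h.card_eq_four h.isSynchronizing hab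
    (h.act_eq_of_not_injective hs) had hbd
  rcases h.eq_or q with rfl | rfl | rfl | rfl
  · rfl
  all_goals omega

lemma act_ne_of_not_injective (hs : ¬ Function.Injective (act s)) (q : Q) : act s q ≠ a := by
  have hmem : act s q ∈ univ.image (act s) := mem_image_of_mem _ (mem_univ q)
  simpa [h.image_univ_of_not_injective hs] using hmem

lemma mergeLength_eq_or (hpq : p ≠ q) (hp : p ≠ a) (hq : q ≠ a) :
    ℓ p q = ℓ b c ∨ ℓ p q = ℓ b d ∨ ℓ p q = ℓ c d := by
  have hcomm := mergeLength_comm act q p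
  rcases (h.eq_or p).resolve_left hp with rfl | rfl | rfl <;>
    rcases (h.eq_or q).resolve_left hq with rfl | rfl | rfl <;> simp_all

lemma injOn_act (s : A) : Set.InjOn (act s) {a}ᶜ := fun p hp q hq heq => by
  by_contra hpq
  rcases h.eq_of_act_eq hpq heq with ⟨rfl, -⟩ | ⟨-, rfl⟩
  exacts [hp rfl, hq rfl]

lemma act_ne_act_c (hp : p = b ∨ p = d) : act s p ≠ act s c := by
  obtain ⟨⟨hab, hac, had⟩, ⟨hbc, -⟩, hcd⟩ := h.pairwise_ne
  rcases hp with rfl | rfl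
  exacts [(h.injOn_act s).ne hab.symm hac.symm hbc, (h.injOn_act s).ne had.symm hac.symm hcd.symm]

lemma mergeLength_act_lt_six (hs : act s a = act s b) (hp : p = b ∨ p = d) :
    ℓ (act s p) (act s c) < 6 := by
  obtain ⟨⟨hab, -, had⟩, ⟨-, hbd⟩, -⟩ := h.pairwise_ne
  refine (h.mergeLength_le_six _ _).lt_of_ne fun hsix => ?_
  rcases h.pair_eq_pair (h.act_ne_act_c hp) ((h.injOn_act s).ne hab.symm had.symm hbd)
    (hsix.trans (h.mergeLength_eq_six hs).symm) with ⟨-, hc⟩ | ⟨-, hc⟩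
  exacts [h.act_ne_act_c (.inr rfl) hc.symm, h.act_ne_act_c (.inl rfl) hc.symm]

lemma mergeLength_eq_five_or (hs : ¬ Function.Injective (act s)) (hp : p = b ∨ p = d)
    (hfive : 5 ≤ ℓ (act s p) (act s c)) : ℓ b c = 5 ∨ ℓ b d = 5 ∨ ℓ c d = 5 := by
  have hlt := h.mergeLength_act_lt_six (h.act_eq_of_not_injective hs) hp
  have := h.mergeLength_eq_or (h.act_ne_act_c hp) (h.act_ne_of_not_injective hs p)
    (h.act_ne_of_not_injective hs c)
  omega

lemma mergeLength_eq_five_or_of_mergeLength_eq_six (hp : p = b ∨ p = d)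
    (hsix : ℓ p c = 6) : ℓ b c = 5 ∨ ℓ b d = 5 ∨ ℓ c d = 5 := by
  obtain ⟨s, hs⟩ := h.exists_not_injective
  have := h.isSynchronizing.mergeLength_le s p c
  exact h.mergeLength_eq_five_or hs hp (by omega)

lemma mergeLength_eq_six_or : ℓ b c = 6 ∨ ℓ b d = 6 ∨ ℓ c d = 6 := by
  obtain ⟨⟨hab, -, had⟩, ⟨-, hbd⟩, -⟩ := h.pairwise_ne
  obtain ⟨s, hs⟩ := h.exists_merge
  have hninj : ¬ Function.Injective (act s) := fun hinj => hab (hinj hs)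
  have := h.mergeLength_eq_or ((h.injOn_act s).ne hab.symm had.symm hbd)
    (h.act_ne_of_not_injective hninj b) (h.act_ne_of_not_injective hninj d)
  rw [h.mergeLength_eq_six hs] at this
  simpa only [eq_comm] using this

lemma mergeLength_pairwise_ne :
    (ℓ a c ≠ ℓ a d ∧ ℓ a c ≠ ℓ b c ∧ ℓ a c ≠ ℓ b d ∧ ℓ a c ≠ ℓ c d) ∧
      (ℓ a d ≠ ℓ b c ∧ ℓ a d ≠ ℓ b d ∧ ℓ a d ≠ ℓ c d) ∧
        (ℓ b c ≠ ℓ b d ∧ ℓ b c ≠ ℓ c d) ∧ ℓ b d ≠ ℓ c d := by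
  have hne := h.pairwise_ne
  have hpair := @h.pair_eq_pair
  grind

lemma mergeLength_mem_Icc :
    ℓ a c ∈ Set.Icc 2 6 ∧ ℓ a d ∈ Set.Icc 2 6 ∧ ℓ b c ∈ Set.Icc 2 6 ∧ ℓ b d ∈ Set.Icc 2 6 ∧
      ℓ c d ∈ Set.Icc 2 6 := by
  have hmem : ∀ p q, p ≠ q → ¬ (p = a ∧ q = b ∨ p = b ∧ q = a) → ℓ p q ∈ Set.Icc 2 6 :=
    fun p q hpq hab => by
      have hpos := h.isSynchronizing.mergeLength_pos hpq
      have hne : ℓ p q ≠ 1 := fun hone =>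
        hab (h.pair_eq_pair hpq h.pairwise_ne.1.1 (hone.trans h.mergeLength_a_b.symm))
      exact ⟨by omega, h.mergeLength_le_six p q⟩
  have hne := h.pairwise_ne
  grind

lemma resetLength_compl_d_le_six : resetLength act {d}ᶜ ≤ 6 := by
  obtain ⟨s, hs⟩ := h.exists_merge
  have hle := h.resetLength_le_mergeLength_act hs c
  have hlt := h.mergeLength_act_lt_six hs (.inl rfl)
  rw [h.compl_d_eq]
  omega

lemma mergeLength_eq_five_or_of_six_le_resetLength (hsix : 6 ≤ resetLength act {d}ᶜ) :
    ℓ b c = 5 ∨ ℓ b d = 5 ∨ ℓ c d = 5 := by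
  obtain ⟨s, hs⟩ := h.exists_not_injective
  have hle := h.resetLength_le_mergeLength_act (h.act_eq_of_not_injective hs) c
  rw [← h.compl_d_eq] at hle
  exact h.mergeLength_eq_five_or hs (.inl rfl) (by omega)

lemma resetLength_compl_le_of_injective (hs : Function.Injective (act s)) (p : Q) :
    resetLength act {p}ᶜ ≤ resetLength act {act s p}ᶜ + 1 := by
  have hne : ({p}ᶜ : Finset Q).Nonempty := by
    rw [← card_pos, card_compl, h.card_eq_four, card_singleton]
    norm_num
  have hle := h.isSynchronizing.resetLength_le hne s
  rwa [image_compl_singleton_of_injective hs] at hle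

lemma act_a_eq_or (hs : Function.Injective (act s)) : act s a = a ∨ act s a = b := by
  have hle := h.resetLength_compl_le_of_injective hs a
  have hd := h.resetLength_compl_d_le_six
  rw [h.resetLength_compl_a] at hle
  rcases h.eq_or (act s a) with heq | heq | heq | heq <;>
    simp only [heq, h.resetLength_compl_c, true_or, or_true] at hle ⊢ <;> omega

lemma act_b_ne (hs : Function.Injective (act s)) : act s b ≠ d := fun heq => by
  have hle := h.resetLength_compl_le_of_injective hs b
  have hd := h.resetLength_compl_d_le_six
  rw [h.resetLength_compl_b, heq] at hle
  omega

lemma exists_injective_resetLength_compl_eq {k : ℕ} (hk : k ≠ 9) (hp : p = a ∨ p = b)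
    (hpk : resetLength act {p}ᶜ = k + 1) :
    ∃ s, Function.Injective (act s) ∧ resetLength act {act s p}ᶜ = k := by
  obtain ⟨s, hs⟩ := exists_resetLength_image_eq hpk
  by_cases hinj : Function.Injective (act s)
  · exact ⟨s, hinj, by rwa [image_compl_singleton_of_injective hinj] at hs⟩
  obtain ⟨q, hqp, hq⟩ : ∃ q ≠ p, act s q = act s p := by
    have hmerge := h.act_eq_of_not_injective hinj
    have hab := h.pairwise_ne.1.1
    rcases hp with rfl | rfl
    exacts [⟨b, hab.symm, hmerge.symm⟩, ⟨a, hab, hmerge⟩]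
  have himage : ({p}ᶜ : Finset Q).image (act s) = univ.image (act s) := by
    rw [← insert_compl_self p, image_insert, insert_eq_of_mem]
    exact hq ▸ mem_image_of_mem _ (by simpa using hqp)
  rw [himage, h.image_univ_of_not_injective hinj, h.resetLength_compl_a] at hs
  exact absurd hs.symm hk

lemma exists_act_a_eq : ∃ s, Function.Injective (act s) ∧ act s a = b := by
  obtain ⟨s, hs, hlen⟩ := h.exists_injective_resetLength_compl_eq (k := 8) (by norm_num)
    (.inl rfl) h.resetLength_compl_a
  refine ⟨s, hs, (h.act_a_eq_or hs).resolve_left fun heq => ?_⟩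
  rw [heq, h.resetLength_compl_a] at hlen
  omega

lemma exists_act_b_eq : ∃ s, Function.Injective (act s) ∧ act s b = c := by
  obtain ⟨s, hs, hlen⟩ := h.exists_injective_resetLength_compl_eq (k := 7) (by norm_num)
    (.inr rfl) h.resetLength_compl_b
  have ha := h.resetLength_compl_a
  have hb := h.resetLength_compl_b
  have hd := h.resetLength_compl_d_le_six
  rcases h.eq_or (act s b) with heq | heq | heq | heq
  case inr.inr.inl => exact ⟨s, hs, heq⟩
  all_goals
    rw [heq] at hlen
    omega

lemma act_pairwise_ne (hs : Function.Injective (act s)) :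
    (act s a ≠ act s b ∧ act s a ≠ act s c ∧ act s a ≠ act s d) ∧
      (act s b ≠ act s c ∧ act s b ≠ act s d) ∧ act s c ≠ act s d := by
  simpa using h.nodup.map hs

lemma not_four_cycle (hs : Function.Injective (act s)) (ha : act s a = b) (hb : act s b = c)
    (hc : act s c = d) (hd : act s d = a) : False := by
  have hact := h.isSynchronizing
  have hda : ℓ a d ≤ ℓ a b + 1 := hact.mergeLength_le_of_eq_swap ha hd
  have hcd : ℓ c d ≤ ℓ a d + 1 := hact.mergeLength_le_of_eq_swap hc hd
  have hbc : ℓ b c ≤ ℓ c d + 1 := hact.mergeLength_le_of_eq hb hc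
  have hL := h.resetLength_compl_le_of_injective hs c
  rw [hc, h.resetLength_compl_c] at hL
  have hfive := h.mergeLength_eq_five_or_of_six_le_resetLength (by omega)
  have hsix := h.mergeLength_eq_six_or
  have hab := h.mergeLength_a_b
  have hne := h.mergeLength_pairwise_ne
  have hmem := h.mergeLength_mem_Icc
  simp only [Set.mem_Icc] at hmem
  omega

lemma mergeLength_eq_of_three_cycle (ha : act s a = b) (hb : act s b = c) (hc : act s c = a)
    (hd : act s d = d) : ℓ a c = 2 ∧ ℓ b c = 3 ∧ ℓ a d = 4 := by
  have hact := h.isSynchronizing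
  have hac : ℓ a c ≤ ℓ a b + 1 := hact.mergeLength_le_of_eq_swap ha hc
  have hbc : ℓ b c ≤ ℓ a c + 1 := hact.mergeLength_le_of_eq_swap hb hc
  have had : ℓ a d ≤ ℓ b d + 1 := hact.mergeLength_le_of_eq ha hd
  have hbd : ℓ b d ≤ ℓ c d + 1 := hact.mergeLength_le_of_eq hb hd
  have hcd : ℓ c d ≤ ℓ a d + 1 := hact.mergeLength_le_of_eq hc hd
  have hfive := h.mergeLength_eq_five_or_of_mergeLength_eq_six (p := d) (.inr rfl)
  rw [mergeLength_comm act d c] at hfive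
  have hsix := h.mergeLength_eq_six_or
  have hab := h.mergeLength_a_b
  have hne := h.mergeLength_pairwise_ne
  have hmem := h.mergeLength_mem_Icc
  simp only [Set.mem_Icc] at hmem
  omega

lemma mergeLength_eq_of_act_a_b (hs : Function.Injective (act s)) (ha : act s a = b)
    (hb : act s b = c) : ℓ a c = 2 ∧ ℓ b c = 3 ∧ ℓ a d = 4 := by
  have hne := h.act_pairwise_ne hs
  by_cases hc : act s c = a
  · have hd : act s d = d := by grind [h.eq_or (act s d)]
    exact h.mergeLength_eq_of_three_cycle ha hb hc hd
  · have hcd : act s c = d := by grind [h.eq_or (act s c)]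
    have hda : act s d = a := by grind [h.eq_or (act s d)]
    exact (h.not_four_cycle hs ha hb hcd hda).elim

lemma act_c_d_of_swap (ht : Function.Injective (act t)) (hta : act t a = b) (htb : act t b = a) :
    act t c = c ∧ act t d = d ∨ act t c = d ∧ act t d = c := by
  grind [h.act_pairwise_ne ht, h.eq_or (act t c), h.eq_or (act t d)]

lemma not_three_cycle_of_swap (ha : act s a = a) (hc : act s c = d) (hd : act s d = b)
    (ht : Function.Injective (act t)) (hta : act t a = b) (htb : act t b = a) : False := by
  have hact := h.isSynchronizing
  have had : ℓ a d ≤ ℓ a b + 1 := hact.mergeLength_le_of_eq ha hd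
  have hac : ℓ a c ≤ ℓ a d + 1 := hact.mergeLength_le_of_eq ha hc
  have hab := h.mergeLength_a_b
  have hne := h.mergeLength_pairwise_ne
  have hmem := h.mergeLength_mem_Icc
  simp only [Set.mem_Icc] at hmem
  rcases h.act_c_d_of_swap ht hta htb with ⟨-, htd⟩ | ⟨htc, htd⟩
  · have hbd : ℓ b d ≤ ℓ a d + 1 := hact.mergeLength_le_of_eq htb htd
    omega
  · have hbc : ℓ b c ≤ ℓ a d + 1 := hact.mergeLength_le_of_eq htb htc
    have hbd : ℓ b d ≤ ℓ a c + 1 := hact.mergeLength_le_of_eq htb htd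
    omega

lemma mergeLength_eq_of_swaps (ha : act s a = a) (hb : act s b = c) (hc : act s c = b)
    (hd : act s d = d) (ht : Function.Injective (act t)) (hta : act t a = b)
    (htb : act t b = a) : ℓ a c = 2 ∧ ℓ b c = 3 ∧ ℓ a d = 4 := by
  have hact := h.isSynchronizing
  have hac : ℓ a c ≤ ℓ a b + 1 := hact.mergeLength_le_of_eq ha hc
  have hbd : ℓ b d ≤ ℓ c d + 1 := hact.mergeLength_le_of_eq hb hd
  have hcd : ℓ c d ≤ ℓ b d + 1 := hact.mergeLength_le_of_eq hc hd
  have hab := h.mergeLength_a_b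
  have hsix := h.mergeLength_eq_six_or
  have hne := h.mergeLength_pairwise_ne
  have hmem := h.mergeLength_mem_Icc
  simp only [Set.mem_Icc] at hmem
  rcases h.act_c_d_of_swap ht hta htb with ⟨htc, htd⟩ | ⟨-, htd⟩
  · have hbc : ℓ b c ≤ ℓ a c + 1 := hact.mergeLength_le_of_eq htb htc
    have had : ℓ a d ≤ ℓ b d + 1 := hact.mergeLength_le_of_eq hta htd
    have hbd' : ℓ b d ≤ ℓ a d + 1 := hact.mergeLength_le_of_eq htb htd
    omega
  · have hbd' : ℓ b d ≤ ℓ a c + 1 := hact.mergeLength_le_of_eq htb htd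
    have hfive := h.mergeLength_eq_five_or_of_mergeLength_eq_six (p := b) (.inl rfl)
    omega

lemma mergeLength_eq : ℓ a c = 2 ∧ ℓ b c = 3 ∧ ℓ a d = 4 := by
  obtain ⟨t, ht, hta⟩ := h.exists_act_a_eq
  obtain ⟨s, hs, hb⟩ := h.exists_act_b_eq
  have hne := h.act_pairwise_ne hs
  by_cases htbc : act t b = c
  · exact h.mergeLength_eq_of_act_a_b ht hta htbc
  have htb : act t b = a := by
    grind [h.eq_or (act t b), h.act_pairwise_ne ht, h.act_b_ne ht]
  rcases h.act_a_eq_or hs with ha | ha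
  · by_cases hc : act s c = b
    · have hd : act s d = d := by grind [h.eq_or (act s d)]
      exact h.mergeLength_eq_of_swaps ha hb hc hd ht hta htb
    · have hcd : act s c = d := by grind [h.eq_or (act s c)]
      have hdb : act s d = b := by grind [h.eq_or (act s d)]
      exact (h.not_three_cycle_of_swap ha hcd hdb ht hta htb).elim
  · exact h.mergeLength_eq_of_act_a_b hs ha hb

protected theorem false : False := by
  obtain ⟨hac, hbc, had⟩ := h.mergeLength_eq
  obtain ⟨s, hs⟩ := exists_resetLength_image_eq (k := 3) had
  rw [image_insert, image_singleton] at hs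
  change ℓ (act s a) (act s d) = 3 at hs
  have hinj : Function.Injective (act s) := by
    by_contra hninj
    have hmerge := h.act_eq_of_not_injective hninj
    rw [hmerge, h.mergeLength_eq_six hmerge] at hs
    omega
  have hne := h.act_pairwise_ne hinj
  have hpair := h.pair_eq_pair hne.1.2.2 h.pairwise_ne.2.1.1 (hs.trans hbc.symm)
  have hact_b : act s b = a := by
    grind [h.pairwise_ne, h.act_a_eq_or hinj, h.eq_or (act s b), h.act_b_ne hinj]
  have hact_d : act s d = c := by grind [h.pairwise_ne, h.act_a_eq_or hinj]
  have hbd : ℓ b d ≤ ℓ a c + 1 := h.isSynchronizing.mergeLength_le_of_eq hact_b hact_d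
  have hne_merge := h.mergeLength_pairwise_ne
  have hmem := h.mergeLength_mem_Icc
  simp only [Set.mem_Icc] at hmem
  omega

end IsSlow

theorem resetLength_univ_le_nine (hQ : Fintype.card Q = 4) (hact : IsSynchronizing act) :
    resetLength act univ ≤ 9 := by
  by_contra! hslow
  obtain ⟨a, b, c, d, h⟩ := exists_isSlow hQ hact hslow
  exact h.false

end FourStates

theorem resetLength_univ_le_four [Fintype Q] (hQ : Fintype.card Q = 3)
    (hact : IsSynchronizing act) : resetLength act univ ≤ 4 := by
  have : Nonempty Q := hact.nonempty
  obtain ⟨s, hs⟩ := hact.exists_not_injective (by omega)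
  have himage : #(univ.image (act s)) ≤ 2 := by
    have := card_image_univ_lt hs
    omega
  calc resetLength act univ ≤ resetLength act (univ.image (act s)) + 1 :=
        hact.resetLength_le univ_nonempty s
    _ ≤ (Fintype.card Q).choose 2 + 1 := by
        gcongr
        exact resetLength_le_choose_two_of_card_le_two (univ_nonempty.image _) himage
    _ = 4 := by rw [hQ]; rfl

theorem resetLength_univ_le_sq [Fintype Q] (hQ : Fintype.card Q ≤ 4)
    (hact : IsSynchronizing act) : resetLength act univ ≤ (Fintype.card Q - 1) ^ 2 := by
  have : Nonempty Q := hact.nonempty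
  have hpos : 0 < Fintype.card Q := Fintype.card_pos
  obtain h1 | h2 | h3 | h4 : Fintype.card Q = 1 ∨ Fintype.card Q = 2 ∨ Fintype.card Q = 3 ∨
      Fintype.card Q = 4 := by omega
  · rw [resetLength_eq_zero_of_card_eq_one (card_univ.trans h1)]
    exact Nat.zero_le _
  · have hle : resetLength act univ ≤ (Fintype.card Q).choose 2 :=
      resetLength_le_choose_two (card_univ.trans h2)
    rwa [h2] at hle ⊢
  · rw [h3]
    exact resetLength_univ_le_four h3 hact
  · rw [h4]
    exact resetLength_univ_le_nine h4 hact

end Cerny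

theorem stmt_1 {Q A : Type*} [Fintype Q] [DecidableEq Q] (act : A → Q → Q)
    (hn : Fintype.card Q ≤ 4)
    (h : ∃ w : List A, (wordImage act Finset.univ w).card = 1) :
    ∃ w : List A, w.length ≤ (Fintype.card Q - 1) ^ 2 ∧
      (wordImage act Finset.univ w).card = 1 := by
  obtain ⟨w, hlength, hw⟩ := Cerny.exists_length_eq_resetLength h
  exact ⟨w, hlength ▸ Cerny.resetLength_univ_le_sq hn h, hw⟩
end

section
/- Let (Q, Σ) be a DFA with n = |Q| satisfying hypothesis (H). Then there exist distinct states p₁, p₂ ∈ Q and letters b, a ∈ Σ such that Qb = Q∖{p₁}, p₁b = p₂b, Qa = Q, p₁a = p₂, and Q(ba) = Q∖{p₂}. -/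
/-! Every word of length at most 3 has an image of at least `n - 1` states. Suppose that no
bijective letter moves the state `p` missed by a letter `b` with `Qb = Q ∖ {p}`. Then every `Qba`
equals `Qa` or `Qb`, so the images of words of length at most 1 already exhaust all images and no
word has a smaller image, contradicting (H). So some bijective letter `a` moves such a `p`. Since
`bb` and `bab` have large images, `b` is injective on `Q ∖ {p}` and on `Q ∖ {pa}`; as `b` is
not injective on `Q`, it must identify `p` and `pa`. -/

theorem apply_eq_of_injOn_compl_singleton {α β : Type*} {f : α → β} {p q : α}
    (hf : ¬ f.Injective) (hp : Set.InjOn f {p}ᶜ) (hq : Set.InjOn f {q}ᶜ) : f p = f q := by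
  obtain ⟨x, y, hxy, hne⟩ := Function.not_injective_iff.mp hf
  have hp_mem : x = p ∨ y = p := by
    by_contra! h
    exact hne (hp h.1 h.2 hxy)
  have hq_mem : x = q ∨ y = q := by
    by_contra! h
    exact hne (hq h.1 h.2 hxy)
  rcases hp_mem with rfl | rfl <;> rcases hq_mem with rfl | rfl <;> simp [hxy]

theorem image_univ_eq_univ_iff {α β : Type*} [Fintype α] [Fintype β] [DecidableEq β] {f : α → β} :
    Finset.univ.image f = Finset.univ ↔ f.Surjective := by
  simp [Finset.eq_univ_iff_forall, Function.Surjective]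

theorem image_compl_singleton {α β : Type*} [Fintype α] [Fintype β] [DecidableEq α]
    [DecidableEq β] {g : α → β} (hg : g.Bijective) (p : α) :
    Finset.image g {p}ᶜ = {g p}ᶜ := by
  rw [← Finset.coe_inj]
  simpa using Set.image_compl_eq (s := {p}) hg

section AlmostFull

variable {α : Type*} [Fintype α]

theorem eq_of_subset_of_ne_univ_of_card_le {S T : Finset α} (hST : S ⊆ T) (hT : T ≠ Finset.univ)
    (hS : Fintype.card α ≤ S.card + 1) : S = T := by
  have hT_lt : T.card < Fintype.card α := (Finset.card_lt_iff_ne_univ T).mpr hT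
  exact Finset.eq_of_subset_of_card_le hST (by omega)

variable [DecidableEq α]

theorem exists_eq_compl_singleton_of_ne_univ {S : Finset α} (hne : S ≠ Finset.univ)
    (hS : Fintype.card α ≤ S.card + 1) : ∃ p, S = {p}ᶜ := by
  obtain ⟨p, hp⟩ : ∃ p, p ∉ S := by simpa [Finset.eq_univ_iff_forall] using hne
  have hSp : S ⊆ {p}ᶜ := by
    simpa [Finset.subset_compl_comm] using hp
  exact ⟨p, eq_of_subset_of_ne_univ_of_card_le hSp (by simp) hS⟩

theorem injOn_compl_singleton_of_card_le {β : Type*} [DecidableEq β] {f : α → β} {p : α}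
    (h : Fintype.card α ≤ (Finset.image f {p}ᶜ).card + 1) : Set.InjOn f {p}ᶜ := by
  have hcard : (Finset.image f {p}ᶜ).card = ({p}ᶜ : Finset α).card := by
    refine le_antisymm Finset.card_image_le ?_
    rw [Finset.card_compl, Finset.card_singleton]
    omega
  simpa using Finset.injOn_of_card_image_eq hcard

theorem image_image_univ_eq_or {β : Type*} [Fintype β] {f : β → α} {g : α → α}
    (hcard : Fintype.card α ≤ ((Finset.univ.image f).image g).card + 1)
    (hfix : ∀ p, Finset.univ.image f = {p}ᶜ → g.Bijective → g p = p) :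
    (Finset.univ.image f).image g = Finset.univ.image f ∨
      (Finset.univ.image f).image g = Finset.univ.image g := by
  by_cases hf : Finset.univ.image f = Finset.univ
  · exact Or.inr (by rw [hf])
  by_cases hg : g.Bijective
  · left
    obtain ⟨p, hp⟩ := exists_eq_compl_singleton_of_ne_univ hf
      (hcard.trans (Nat.succ_le_succ Finset.card_image_le))
    rw [hp, image_compl_singleton hg, hfix p hp hg]
  · right
    exact eq_of_subset_of_ne_univ_of_card_le (Finset.image_subset_image (Finset.subset_univ _))
      (by rwa [Ne, image_univ_eq_univ_iff, Finite.surjective_iff_bijective]) hcard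

end AlmostFull

section WordImage

variable {Q A : Type*} [DecidableEq Q] (act : A → Q → Q)

theorem wordImage_append_singleton (R : Finset Q) (w : List A) (s : A) :
    wordImage act R (w ++ [s]) = (wordImage act R w).image (act s) := by
  induction w generalizing R with
  | nil => rfl
  | cons _ _ ih => exact ih _

variable {act} [Fintype Q]

theorem exists_length_le_one_wordImage_eq
    (hcard : ∀ w : List A, w.length ≤ 2 →
      Fintype.card Q ≤ (wordImage act Finset.univ w).card + 1)
    (hfix : ∀ b a p, Finset.univ.image (act b) = {p}ᶜ → (act a).Bijective → act a p = p)
    (w : List A) :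
    ∃ v : List A, v.length ≤ 1 ∧ wordImage act Finset.univ w = wordImage act Finset.univ v := by
  induction w using List.reverseRecOn with
  | nil => exact ⟨[], by simp, rfl⟩
  | append_singleton w a ih =>
    obtain ⟨v, hv, hwv⟩ := ih
    rw [wordImage_append_singleton, hwv]
    match v, hv with
    | [], _ => exact ⟨[a], le_rfl, rfl⟩
    | [b], _ =>
      rcases image_image_univ_eq_or (hcard [b, a] le_rfl) (hfix b a) with h | h
      · exact ⟨[b], le_rfl, h⟩
      · exact ⟨[a], le_rfl, h⟩

end WordImage

theorem stmt_5 {Q A : Type*} [Fintype Q] [DecidableEq Q] (act : A → Q → Q)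
    (hH1 : ∃ w : List A, (wordImage act Finset.univ w).card ≤ Fintype.card Q - 2)
    (hH2 : ∀ w : List A, w.length ≤ 3 →
      Fintype.card Q - 2 < (wordImage act Finset.univ w).card) :
    ∃ p₁ p₂ : Q, p₁ ≠ p₂ ∧ ∃ b a : A,
      Finset.univ.image (act b) = Finset.univ \ {p₁} ∧
      act b p₁ = act b p₂ ∧
      Finset.univ.image (act a) = Finset.univ ∧
      act a p₁ = p₂ ∧
      wordImage act Finset.univ [b, a] = Finset.univ \ {p₂} := by
  have hcard (w : List A) (hw : w.length ≤ 3) :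
      Fintype.card Q ≤ (wordImage act Finset.univ w).card + 1 := by
    have := hH2 w hw
    omega
  obtain ⟨b, a, p, hb, ha, hap⟩ : ∃ b a p,
      Finset.univ.image (act b) = {p}ᶜ ∧ (act a).Bijective ∧ act a p ≠ p := by
    by_contra! hfix
    obtain ⟨w, hw⟩ := hH1
    obtain ⟨v, hv, hwv⟩ :=
      exists_length_le_one_wordImage_eq (fun u hu => hcard u (by omega)) hfix w
    exact (hH2 v (by omega)).not_ge (hwv ▸ hw)
  have hba : (Finset.univ.image (act b)).image (act a) = {act a p}ᶜ := by
    rw [hb, image_compl_singleton ha]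
  have hb_inj : ¬ (act b).Injective := by
    rw [Finite.injective_iff_surjective, ← image_univ_eq_univ_iff, hb]
    exact (Finset.compl_ne_univ_iff_nonempty _).mpr (Finset.singleton_nonempty p)
  have hbb : Set.InjOn (act b) {p}ᶜ :=
    injOn_compl_singleton_of_card_le (hb ▸ hcard [b, b] (by simp))
  have hbab : Set.InjOn (act b) {act a p}ᶜ :=
    injOn_compl_singleton_of_card_le (hba ▸ hcard [b, a, b] (by simp))
  simp only [← Finset.compl_eq_univ_sdiff]
  exact ⟨p, act a p, hap.symm, b, a, hb, apply_eq_of_injOn_compl_singleton hb_inj hbb hbab,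
    image_univ_eq_univ_iff.mpr ha.surjective, rfl, hba⟩
end

section
/- Let (Q, Σ) be a DFA with n = |Q| satisfying hypothesis (H). Then there exist distinct states p₁, p₂ ∈ Q, letters b, a, d ∈ Σ, and a state q ∈ Q∖{p₁, p₂} such that: Qb = Q∖{p₁}, p₁b = p₂b, Qa = Q, p₁a = p₂, Q(ba) = Q∖{p₂}, qb ≠ p₁, Q(bad) = Q∖{q}, Q(badb) = Q∖{p₁, qb}, and, writing X = {p₁, p₁a, p₁a², …} for the orbit of p₁ under a, one of the following holds: (1) |X| ≥ 3 and d = a; (2) |X| = 2, Qd = Q, p₁d = p₁, and there exists a state p₃ ∈ Q∖{p₁, p₂} with p₃d = p₂. -/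
/-!
By the bound on words of length at most three, every letter is a permutation or merges exactly one
pair of states and misses exactly one state. If `b` misses `p`, the words `bc` and `bac` show that
both `p` and `pa`, for any permutation letter `a`, are merged by every non-permutation `c`: deleting
such a state before reading `c` costs nothing. If the set of all these states `p` and `pa` were
closed under the permutation letters, no word could ever lose a second state. So some `pad` lies
outside it; then `p` and `pa` are distinct, hence they are the pair merged by `b`, while `pad` is
not merged by `b`. Either `a` swaps `p` and `pa` while `d` fixes `p`, or one of `a`, `d` can play
both roles.
-/

/-- `f` misses exactly one point, namely `p`. -/
def MissesOnly {α β : Type*} [Fintype α] [Fintype β] [DecidableEq β] (f : α → β) (p : β) : Prop :=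
  Finset.univ.image f = Finset.univ \ {p}

/-- `x` shares its image under `f` with another point. -/
def IsMerged {α β : Type*} (f : α → β) (x : α) : Prop :=
  ∃ y, y ≠ x ∧ f y = f x

/-- `x` is a spare state of the automaton: every letter missing exactly one state merges `x` with
another state, so such a letter has the same image with or without `x`. -/
def IsSpare {Q A : Type*} [Fintype Q] [DecidableEq Q] (act : A → Q → Q) (x : Q) : Prop :=
  ∀ c p, MissesOnly (act c) p → IsMerged (act c) x

section Maps

variable {α β : Type*} [Fintype α] [DecidableEq β] {f : α → β}

lemma card_univ_sdiff_singleton [DecidableEq α] (x : α) :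
    (Finset.univ \ {x} : Finset α).card = Fintype.card α - 1 := by
  rw [Finset.card_univ_sdiff, Finset.card_singleton]

lemma image_univ_sdiff_singleton_of_bijective [DecidableEq α] [Fintype β]
    (hf : Function.Bijective f) (x : α) :
    (Finset.univ \ {x}).image f = Finset.univ \ {f x} := by
  rw [Finset.image_sdiff _ _ hf.injective, Finset.image_univ_of_surjective hf.surjective,
    Finset.image_singleton]

lemma IsMerged.image_univ_sdiff_singleton [DecidableEq α] {x : α} (hx : IsMerged f x) :
    (Finset.univ \ {x}).image f = Finset.univ.image f := by
  obtain ⟨y, hyx, hfy⟩ := hx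
  refine (Finset.image_subset_image (Finset.subset_univ _)).antisymm
    (Finset.image_subset_iff.2 fun z _ => Finset.mem_image.2 ?_)
  by_cases hzx : z = x
  · exact ⟨y, by simpa using hyx, by rw [hfy, hzx]⟩
  · exact ⟨z, by simpa using hzx, rfl⟩

lemma image_univ_sdiff_singleton_of_not_isMerged [DecidableEq α] {x : α} (hx : ¬ IsMerged f x) :
    (Finset.univ \ {x}).image f = Finset.univ.image f \ {f x} := by
  have eq_of_apply_eq : ∀ z, f z = f x → z = x := fun z hz =>
    by_contra fun hzx => hx ⟨z, hzx, hz⟩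
  ext y
  simp only [Finset.mem_image, Finset.mem_sdiff, Finset.mem_univ, true_and, Finset.mem_singleton]
  constructor
  · rintro ⟨z, hzx, rfl⟩
    exact ⟨⟨z, rfl⟩, fun hz => hzx (eq_of_apply_eq z hz)⟩
  · rintro ⟨⟨z, rfl⟩, hz⟩
    exact ⟨z, fun hzx => hz (congrArg f hzx), rfl⟩

lemma isMerged_of_card_image_le [DecidableEq α] {x : α}
    (h : (Finset.univ.image f).card ≤ ((Finset.univ \ {x}).image f).card) : IsMerged f x := by
  by_contra hx
  rw [image_univ_sdiff_singleton_of_not_isMerged hx] at h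
  have mem_image : f x ∈ Finset.univ.image f := Finset.mem_image_of_mem f (Finset.mem_univ x)
  exact h.not_gt (Finset.card_lt_card
    (Finset.sdiff_ssubset (Finset.singleton_subset_iff.2 mem_image) (Finset.singleton_nonempty _)))

lemma IsMerged.injOn_compl_singleton {x : α} (hx : IsMerged f x)
    (hf : Fintype.card α ≤ (Finset.univ.image f).card + 1) : Set.InjOn f {x}ᶜ := by
  classical
  have card_image : ((Finset.univ \ {x}).image f).card = (Finset.univ \ {x} : Finset α).card := by
    refine Finset.card_image_le.antisymm ?_
    rw [card_univ_sdiff_singleton, hx.image_univ_sdiff_singleton]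
    omega
  simpa [← Set.compl_eq_univ_sdiff] using Finset.card_image_iff.1 card_image

lemma IsMerged.eq_or_eq {x r s : α} (hx : IsMerged f x)
    (hf : Fintype.card α ≤ (Finset.univ.image f).card + 1) (hrs : r ≠ s) (h : f r = f s) :
    x = r ∨ x = s := by
  by_contra! hne
  exact hrs (hx.injOn_compl_singleton hf hne.1.symm hne.2.symm h)

lemma IsMerged.apply_eq {x y : α} (hx : IsMerged f x) (hy : IsMerged f y)
    (hf : Fintype.card α ≤ (Finset.univ.image f).card + 1) (hxy : x ≠ y) : f x = f y := by
  obtain ⟨z, hzy, hfz⟩ := hy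
  obtain rfl := (hx.eq_or_eq hf hzy hfz).resolve_right hxy
  exact hfz

end Maps

namespace MissesOnly

variable {α β : Type*} [Fintype α] [Fintype β] [DecidableEq β] {f : α → β} {p : β}

lemma apply_ne (hf : MissesOnly f p) (x : α) : f x ≠ p := by
  have mem_sdiff : f x ∈ Finset.univ \ {p} := hf ▸ Finset.mem_image_of_mem f (Finset.mem_univ x)
  simpa using mem_sdiff

lemma card_image_add_one (hf : MissesOnly f p) :
    (Finset.univ.image f).card + 1 = Fintype.card β := by
  rw [hf, card_univ_sdiff_singleton, Nat.sub_add_cancel (Fintype.card_pos_iff.2 ⟨p⟩)]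

lemma image_univ_sdiff_singleton [DecidableEq α] (hf : MissesOnly f p) {x : α}
    (hx : ¬ IsMerged f x) : (Finset.univ \ {x}).image f = Finset.univ \ {p, f x} := by
  rw [image_univ_sdiff_singleton_of_not_isMerged hx, hf, sdiff_sdiff_left]
  rfl

end MissesOnly

lemma bijective_or_exists_missesOnly {α : Type*} [Fintype α] [DecidableEq α] {f : α → α}
    (h : Fintype.card α - 2 < (Finset.univ.image f).card) :
    Function.Bijective f ∨ ∃ p, MissesOnly f p := by
  refine or_iff_not_imp_left.2 fun hf => ?_
  have card_image_ne : (Finset.univ.image f).card ≠ Fintype.card α := fun hcard =>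
    hf (Finite.injective_iff_bijective.1 (by simpa using Finset.card_image_iff.1 hcard))
  have card_image_le : (Finset.univ.image f).card ≤ Fintype.card α := Finset.card_le_univ _
  have card_compl_image : (Finset.univ.image f)ᶜ.card = 1 := by
    rw [Finset.card_compl]
    omega
  obtain ⟨p, hp⟩ := Finset.card_eq_one.1 card_compl_image
  exact ⟨p, by rw [MissesOnly, ← hp, ← Finset.compl_eq_univ_sdiff, compl_compl]⟩

section Iterates

variable {α : Type*} {f : α → α} {x : α}

lemma three_le_ncard_iterates [Finite α] (h₁ : f x ≠ x) (h₂ : f (f x) ≠ x)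
    (h₃ : f (f x) ≠ f x) : 3 ≤ Set.ncard {y | ∃ k : ℕ, f^[k] x = y} :=
  (Set.two_lt_ncard_iff (Set.toFinite _)).2
    ⟨x, f x, f (f x), ⟨0, rfl⟩, ⟨1, rfl⟩, ⟨2, rfl⟩, h₁.symm, h₂.symm, h₃.symm⟩

lemma ncard_iterates_eq_two (h₁ : f x ≠ x) (h₂ : f (f x) = x) :
    Set.ncard {y | ∃ k : ℕ, f^[k] x = y} = 2 := by
  have iterates_eq : {y | ∃ k : ℕ, f^[k] x = y} = {x, f x} := by
    refine Set.Subset.antisymm ?_ (Set.pair_subset ⟨0, rfl⟩ ⟨1, rfl⟩)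
    rintro _ ⟨k, rfl⟩
    induction k with
    | zero => exact Or.inl rfl
    | succ k ih =>
      rw [Function.iterate_succ_apply']
      rcases ih with hk | hk
      · exact Or.inr (congrArg f hk)
      · exact Or.inl ((congrArg f hk).trans h₂)
  rw [iterates_eq, Set.ncard_pair h₁.symm]

end Iterates

section Automaton

variable {Q A : Type*} [DecidableEq Q] {act : A → Q → Q}

lemma wordImage_concat (R : Finset Q) (w : List A) (c : A) :
    wordImage act R (w ++ [c]) = (wordImage act R w).image (act c) := by
  induction w generalizing R with
  | nil => rfl
  | cons _ _ ih => exact ih _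

variable [Fintype Q]

lemma wordImage_concat_of_bijective {R : Finset Q} {w : List A} {x : Q} {a : A}
    (hw : wordImage act R w = Finset.univ \ {x}) (ha : Function.Bijective (act a)) :
    wordImage act R (w ++ [a]) = Finset.univ \ {act a x} := by
  rw [wordImage_concat, hw, image_univ_sdiff_singleton_of_bijective ha]

lemma wordImage_concat_of_not_isMerged {R : Finset Q} {w : List A} {x p : Q} {c : A}
    (hw : wordImage act R w = Finset.univ \ {x}) (hc : MissesOnly (act c) p)
    (hx : ¬ IsMerged (act c) x) :
    wordImage act R (w ++ [c]) = Finset.univ \ {p, act c x} := by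
  rw [wordImage_concat, hw, hc.image_univ_sdiff_singleton hx]

lemma isSpare_of_wordImage_eq {R : Finset Q} {w : List A} {x : Q}
    (hw : wordImage act R w = Finset.univ \ {x})
    (h : ∀ c, Fintype.card Q - 2 < (wordImage act R (w ++ [c])).card) : IsSpare act x := by
  intro c p hc
  have card_image := h c
  rw [wordImage_concat, hw] at card_image
  have card_image_univ := hc.card_image_add_one
  exact isMerged_of_card_image_le (by omega)

lemma wordImage_univ_eq_of_invariant {S : Set Q}
    (hletter : ∀ c, Function.Bijective (act c) ∨ ∃ p ∈ S, MissesOnly (act c) p)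
    (hspare : ∀ x ∈ S, IsSpare act x)
    (hmaps : ∀ a, Function.Bijective (act a) → Set.MapsTo (act a) S S) (w : List A) :
    wordImage act Finset.univ w = Finset.univ ∨
      ∃ x ∈ S, wordImage act Finset.univ w = Finset.univ \ {x} := by
  induction w using List.reverseRecOn with
  | nil => exact Or.inl rfl
  | append_singleton _ c ih =>
    rcases hletter c, ih with ⟨hc | ⟨p, hp, hc⟩, hw | ⟨x, hx, hw⟩⟩
    · left
      rw [wordImage_concat, hw, Finset.image_univ_of_surjective hc.surjective]
    · exact Or.inr ⟨act c x, hmaps c hc hx, wordImage_concat_of_bijective hw hc⟩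
    · exact Or.inr ⟨p, hp, by rw [wordImage_concat, hw, hc]⟩
    · refine Or.inr ⟨p, hp, ?_⟩
      rw [wordImage_concat, hw, (hspare x hx c p hc).image_univ_sdiff_singleton, hc]

lemma isSpare_of_missesOnly {b : A} {p : Q} (hb : MissesOnly (act b) p)
    (h : ∀ c, Fintype.card Q - 2 < (wordImage act Finset.univ [b, c]).card) : IsSpare act p :=
  isSpare_of_wordImage_eq (w := [b]) hb h

lemma isSpare_apply_of_missesOnly {a b : A} {p : Q} (hb : MissesOnly (act b) p)
    (ha : Function.Bijective (act a))
    (h : ∀ c, Fintype.card Q - 2 < (wordImage act Finset.univ [b, a, c]).card) :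
    IsSpare act (act a p) :=
  isSpare_of_wordImage_eq (wordImage_concat_of_bijective (w := [b]) hb ha) h

lemma exists_missesOnly_and_bijective_escape
    (hsmall : ∃ w : List A, (wordImage act Finset.univ w).card ≤ Fintype.card Q - 2)
    (hlarge : ∀ w : List A, w.length ≤ 3 →
      Fintype.card Q - 2 < (wordImage act Finset.univ w).card) :
    ∃ b p a d, MissesOnly (act b) p ∧ Function.Bijective (act a) ∧ Function.Bijective (act d) ∧
      act a p ≠ p ∧ act d (act a p) ≠ p ∧ act d (act a p) ≠ act a p := by
  by_contra! hcon
  let S : Set Q := {x | ∃ b p, MissesOnly (act b) p ∧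
    (x = p ∨ ∃ a, Function.Bijective (act a) ∧ x = act a p)}
  have hletter : ∀ c, Function.Bijective (act c) ∨ ∃ p ∈ S, MissesOnly (act c) p := fun c =>
    (bijective_or_exists_missesOnly (hlarge [c] (by simp))).imp_right
      fun ⟨p, hp⟩ => ⟨p, ⟨c, p, hp, Or.inl rfl⟩, hp⟩
  have hspare : ∀ x ∈ S, IsSpare act x := by
    rintro x ⟨b, p, hb, rfl | ⟨a, ha, rfl⟩⟩
    · exact isSpare_of_missesOnly hb fun c => hlarge [b, c] (by simp)
    · exact isSpare_apply_of_missesOnly hb ha fun c => hlarge [b, a, c] (by simp)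
  have hmaps : ∀ d, Function.Bijective (act d) → Set.MapsTo (act d) S S := by
    rintro d hd x ⟨b, p, hb, rfl | ⟨a, ha, rfl⟩⟩
    · exact ⟨b, x, hb, Or.inr ⟨d, hd, rfl⟩⟩
    by_cases hap : act a p = p
    · exact ⟨b, p, hb, Or.inr ⟨d, hd, by rw [hap]⟩⟩
    by_cases hdp : act d (act a p) = p
    · exact ⟨b, p, hb, Or.inl hdp⟩
    · exact ⟨b, p, hb, Or.inr ⟨a, ha, hcon b p a d hb ha hd hap hdp⟩⟩
  obtain ⟨w, hw⟩ := hsmall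
  rcases wordImage_univ_eq_of_invariant hletter hspare hmaps w with heq | ⟨x, ⟨b, p, hb, -⟩, heq⟩
  · have card_pos := hlarge [] (by simp)
    rw [heq, Finset.card_univ] at hw
    rw [wordImage, Finset.card_univ] at card_pos
    omega
  · have one_lt_card := Fintype.one_lt_card_iff.2 ⟨_, _, hb.apply_ne p⟩
    rw [heq, card_univ_sdiff_singleton] at hw
    omega

end Automaton

lemma exists_bijective_orbit_alternative {Q A : Type*} [Finite Q] {act : A → Q → Q}
    {a d : A} {p₁ p₂ : Q} (hne : p₁ ≠ p₂)
    (ha : Function.Bijective (act a)) (hap : act a p₁ = p₂)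
    (hd : Function.Bijective (act d)) (hdp : act d p₁ = p₁ ∨ act d p₁ = p₂)
    (hd₁ : act d p₂ ≠ p₁) (hd₂ : act d p₂ ≠ p₂) :
    ∃ a' d', Function.Bijective (act a') ∧ act a' p₁ = p₂ ∧
      Function.Bijective (act d') ∧ act d' p₂ ≠ p₁ ∧ act d' p₂ ≠ p₂ ∧
      ((3 ≤ Set.ncard {x : Q | ∃ k : ℕ, (act a')^[k] p₁ = x} ∧ d' = a') ∨
        (Set.ncard {x : Q | ∃ k : ℕ, (act a')^[k] p₁ = x} = 2 ∧
          act d' p₁ = p₁ ∧ ∃ p₃ : Q, p₃ ≠ p₁ ∧ p₃ ≠ p₂ ∧ act d' p₃ = p₂)) := by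
  rcases hdp with hdp | rfl
  · subst hap
    by_cases hswap : act a (act a p₁) = p₁
    · obtain ⟨p₃, hp₃⟩ := hd.surjective (act a p₁)
      refine ⟨a, d, ha, rfl, hd, hd₁, hd₂,
        Or.inr ⟨ncard_iterates_eq_two hne.symm hswap, hdp, p₃, ?_, ?_, hp₃⟩⟩
      · rintro rfl
        exact hne (hdp.symm.trans hp₃)
      · rintro rfl
        exact hd₂ hp₃
    · have ha₂ : act a (act a p₁) ≠ act a p₁ := ha.injective.ne hne.symm
      exact ⟨a, a, ha, rfl, ha, hswap, ha₂,
        Or.inl ⟨three_le_ncard_iterates hne.symm hswap ha₂, rfl⟩⟩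
  · exact ⟨d, d, hd, rfl, hd, hd₁, hd₂,
      Or.inl ⟨three_le_ncard_iterates hne.symm hd₁ hd₂, rfl⟩⟩

theorem stmt_7 {Q A : Type*} [Fintype Q] [DecidableEq Q] (act : A → Q → Q)
    (hH1 : ∃ w : List A, (wordImage act Finset.univ w).card ≤ Fintype.card Q - 2)
    (hH2 : ∀ w : List A, w.length ≤ 3 →
      Fintype.card Q - 2 < (wordImage act Finset.univ w).card) :
    ∃ p₁ p₂ : Q, p₁ ≠ p₂ ∧ ∃ b a d : A, ∃ q : Q, q ≠ p₁ ∧ q ≠ p₂ ∧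
      Finset.univ.image (act b) = Finset.univ \ {p₁} ∧
      act b p₁ = act b p₂ ∧
      Finset.univ.image (act a) = Finset.univ ∧
      act a p₁ = p₂ ∧
      wordImage act Finset.univ [b, a] = Finset.univ \ {p₂} ∧
      act b q ≠ p₁ ∧
      wordImage act Finset.univ [b, a, d] = Finset.univ \ {q} ∧
      wordImage act Finset.univ [b, a, d, b] = Finset.univ \ {p₁, act b q} ∧
      ((3 ≤ Set.ncard {x : Q | ∃ k : ℕ, (act a)^[k] p₁ = x} ∧ d = a) ∨
        (Set.ncard {x : Q | ∃ k : ℕ, (act a)^[k] p₁ = x} = 2 ∧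
          Finset.univ.image (act d) = Finset.univ ∧ act d p₁ = p₁ ∧
          ∃ p₃ : Q, p₃ ≠ p₁ ∧ p₃ ≠ p₂ ∧ act d p₃ = p₂)) := by
  obtain ⟨b, p₁, a, d, hb, ha, hd, hap, hd₁, hd₂⟩ :=
    exists_missesOnly_and_bijective_escape hH1 hH2
  have hcard := hb.card_image_add_one.ge
  have merged_p₁ : IsMerged (act b) p₁ :=
    isSpare_of_missesOnly hb (fun c => hH2 [b, c] (by simp)) b p₁ hb
  have merged_apply {e : A} (he : Function.Bijective (act e)) : IsMerged (act b) (act e p₁) :=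
    isSpare_apply_of_missesOnly hb he (fun c => hH2 [b, e, c] (by simp)) b p₁ hb
  have hpair := merged_p₁.apply_eq (merged_apply ha) hcard hap.symm
  have hdp := (merged_apply hd).eq_or_eq hcard hap.symm hpair
  obtain ⟨a', d', ha', hap', hd', hd₁', hd₂', halt⟩ :=
    exists_bijective_orbit_alternative hap.symm ha rfl hd hdp hd₁ hd₂
  have not_merged : ¬ IsMerged (act b) (act d' (act a p₁)) := fun hq =>
    (hq.eq_or_eq hcard hap.symm hpair).elim hd₁' hd₂'
  have hba : wordImage act Finset.univ [b, a'] = Finset.univ \ {act a p₁} :=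
    hap' ▸ wordImage_concat_of_bijective (w := [b]) hb ha'
  have hbad := wordImage_concat_of_bijective hba hd'
  exact ⟨p₁, act a p₁, hap.symm, b, a', d', act d' (act a p₁), hd₁', hd₂', hb, hpair,
    Finset.image_univ_of_surjective ha'.surjective, hap', hba, hb.apply_ne _, hbad,
    wordImage_concat_of_not_isMerged hbad hb not_merged,
    halt.imp_right fun ⟨horbit, hfix⟩ =>
      ⟨horbit, Finset.image_univ_of_surjective hd'.surjective, hfix⟩⟩
end
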